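/- Assume Hypothesis (H) with parameter tuple (λ, v, k, c, d, ℓ) equal to one of (3,100,12,10,10,2), (4,100,12,10,10,2), (4,231,24,11,21,2), (4,280,32,10,28,2), (4,280,32,28,10,4). Then the kernel K of the action of G on the class partition C is nontrivial, and K acts faithfully on each class Δ ∈ C. -/

import Mathlib

/-
If the kernel were trivial, `G` would act faithfully on the classes. In the four cases other than
`d = 28` the action of `G` on the classes is primitive, because the size of a block of classes
satisfies a divisibility condition, and contains a cycle of prime length fixing at least three
classes; so it contains the alternating group, and some element of prime order then violates a count
of fixed points and fixed blocks. For `d = 28`, `G` is `2`-transitive on the classes, the stabilizer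
of a class acts faithfully on it, and the normalizer of a subgroup of order `5` forces `81` to
divide the order of this stabilizer. Hence the stabilizer induces a `3`-cycle on the class, so all
of the alternating group `A₁₀`, although no element of order `7` fixes a class.

For the faithfulness, the elements of `K` fixing a class pointwise form a normal subgroup of `K`
none of whose prime divisors exceeds `λ`, since an element of larger prime order fixing a class
pointwise is trivial. They lie in the corresponding core of `K`, which is normal in `G`, and the
arithmetic leaves only orbits of size `1` for it.
-/

section FixedPoints

open MulAction

variable {G X : Type*} [Group G] [MulAction G X]

theorem faithfulSMul_of_forall_eq_one (h : ∀ g : G, (∀ x : X, g • x = x) → g = 1) :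
    FaithfulSMul G X :=
  ⟨fun {g g'} heq => inv_mul_eq_one.mp (h _ fun x => by rw [mul_smul, ← heq x, inv_smul_smul])⟩

variable {p : ℕ} {g : G}

theorem ne_one_of_orderOf_eq_prime (hp : p.Prime) (hg : orderOf g = p) : g ≠ 1 :=
  fun h => hp.ne_one (by rw [← hg, h, orderOf_one])

theorem ncard_modEq_ncard_inter_fixedBy (hp : p.Prime) (hg : orderOf g = p) {S : Set X}
    (hS : S.Finite) (hgS : Set.MapsTo (g • ·) S S) :
    S.ncard ≡ (S ∩ fixedBy X g).ncard [MOD p] := by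
  classical
  have : Fact p.Prime := ⟨hp⟩
  have : Fintype S := hS.fintype
  let f : Function.End S := hgS.restrict
  have hf (n : ℕ) (x : S) : ((f ^ n) x : X) = g ^ n • (x : X) := by
    induction n generalizing x with
    | zero => rw [pow_zero, pow_zero, one_smul]; rfl
    | succ n ih =>
      rw [pow_succ g, mul_smul, show (g • x : X) = f x from rfl, ← ih]
      rfl
  have hfp : f ^ p ^ 1 = 1 := by
    funext x
    apply Subtype.ext
    rw [pow_one, hf, ← hg, pow_orderOf_eq_one, one_smul]
    rfl
  have himage : S ∩ fixedBy X g = (↑) '' Function.fixedPoints f := by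
    ext x
    exact ⟨fun hx => ⟨⟨x, hx.1⟩, Subtype.ext hx.2, rfl⟩, by
      rintro ⟨y, hy, rfl⟩
      exact ⟨y.2, congrArg Subtype.val hy⟩⟩
  rw [himage, Set.ncard_image_of_injective _ Subtype.val_injective, ← Nat.card_coe_set_eq S,
    ← Nat.card_coe_set_eq, Nat.card_eq_fintype_card, Nat.card_eq_fintype_card]
  exact Equiv.Perm.card_fixedPoints_modEq hfp

theorem card_modEq_ncard_fixedBy [Finite X] (hp : p.Prime) (hg : orderOf g = p) :
    Nat.card X ≡ (fixedBy X g).ncard [MOD p] := by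
  simpa only [Set.ncard_univ, Set.univ_inter] using
    ncard_modEq_ncard_inter_fixedBy hp hg Set.finite_univ (Set.mapsTo_univ (g • ·) Set.univ)

theorem subset_fixedBy_of_ncard_lt (hp : p.Prime) (hg : orderOf g = p) {S : Set X}
    (hS : S.Finite) (hgS : Set.MapsTo (g • ·) S S) (hlt : S.ncard < p) : S ⊆ fixedBy X g := by
  have hle : (S ∩ fixedBy X g).ncard ≤ S.ncard := Set.ncard_le_ncard Set.inter_subset_left hS
  have heq := (ncard_modEq_ncard_inter_fixedBy hp hg hS hgS).eq_of_lt_of_lt hlt (hle.trans_lt hlt)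
  exact Set.inter_eq_left.mp (Set.eq_of_subset_of_ncard_le Set.inter_subset_left heq.le hS)

theorem ncard_fixedBy_subMulAction (S : SubMulAction G X) (g : G) :
    (fixedBy S g).ncard = ((S : Set X) ∩ fixedBy X g).ncard := by
  rw [← Set.ncard_image_of_injective _ Subtype.val_injective]
  congr 1
  ext x
  constructor
  · rintro ⟨a, ha, rfl⟩
    exact ⟨a.2, congrArg Subtype.val ha⟩
  · rintro ⟨hx, hgx⟩
    exact ⟨⟨x, hx⟩, Subtype.ext hgx, rfl⟩

theorem ncard_fixedBy_lt [Finite X] [FaithfulSMul G X] (hg : g ≠ 1) :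
    (fixedBy X g).ncard < Nat.card X := by
  rw [← Set.ncard_univ]
  refine Set.ncard_lt_ncard (Set.ssubset_univ_iff.mpr fun h => hg ?_)
  rwa [← fixedBy_eq_univ_iff_eq_one (α := X)]

theorem ncard_fixedBy_add_eq [Finite X] [FaithfulSMul G X] (hp : p.Prime) (hg : orderOf g = p)
    (hfix : (fixedBy X g).Nonempty) (hX : Nat.card X ≤ 2 * p) :
    (fixedBy X g).ncard + p = Nat.card X := by
  have hpos : 0 < (fixedBy X g).ncard := (Set.ncard_pos (Set.toFinite _)).mpr hfix
  have hlt : (fixedBy X g).ncard < Nat.card X :=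
    ncard_fixedBy_lt (ne_one_of_orderOf_eq_prime hp hg)
  obtain ⟨m, hm⟩ := (Nat.modEq_iff_dvd' hlt.le).mp (card_modEq_ncard_fixedBy hp hg).symm
  obtain rfl : m = 1 := by
    have h2 : m < 2 := Nat.lt_of_mul_lt_mul_left (a := p) (by omega)
    have h0 : m ≠ 0 := by
      rintro rfl
      omega
    omega
  omega

theorem exists_orderOf_eq_smul_eq [Finite G] (hp : p.Prime) {a : X}
    (h : p ∣ Nat.card (stabilizer G a)) : ∃ g : G, orderOf g = p ∧ g • a = a := by
  have : Fact p.Prime := ⟨hp⟩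
  obtain ⟨g, hg⟩ := exists_prime_orderOf_dvd_card' p h
  exact ⟨g, by rwa [Subgroup.orderOf_coe], g.2⟩

theorem exists_orderOf_eq_of_factorial_dvd [Finite G] {q n : ℕ} (hq : q.Prime) (hq2 : q ≠ 2)
    (hqn : q ≤ n) (h : n.factorial ∣ 2 * Nat.card G) : ∃ g : G, orderOf g = q := by
  have := Fact.mk hq
  refine exists_prime_orderOf_dvd_card' q ?_
  have hdvd := (hq.dvd_mul.mp (((hq.dvd_factorial).mpr hqn).trans h))
  exact hdvd.resolve_left fun h2 => hq2 ((Nat.prime_dvd_prime_iff_eq hq Nat.prime_two).mp h2)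

end FixedPoints

section Normalizer

open MulAction Subgroup
open scoped Pointwise commutatorElement

variable {G X : Type*} [Group G] [MulAction G X]

theorem commute_of_mem_ker_normalizerMonoidHom {g : G}
    {y : normalizer (zpowers g : Set G)} (hy : (zpowers g).normalizerMonoidHom y = 1) :
    Commute (y : G) g := by
  have hmem : y ∈ (zpowers g).normalizerMonoidHom.ker := hy
  rw [normalizerMonoidHom_ker, mem_subgroupOf] at hmem
  exact (mem_centralizer_iff.mp hmem g (mem_zpowers g)).symm

theorem commute_commutatorElement_of_mem_normalizer {g a b : G}
    (ha : a ∈ normalizer (zpowers g : Set G)) (hb : b ∈ normalizer (zpowers g : Set G)) :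
    Commute ⁅a, b⁆ g := by
  let a' : normalizer (zpowers g : Set G) := ⟨a, ha⟩
  let b' : normalizer (zpowers g : Set G) := ⟨b, hb⟩
  refine commute_of_mem_ker_normalizerMonoidHom (y := ⁅a', b'⁆) ?_
  apply (IsCyclic.mulAutMulEquiv (zpowers g)).injective
  rw [map_commutatorElement, map_commutatorElement, map_one, commutatorElement_eq_one_iff_mul_comm,
    mul_comm]

theorem commute_of_mem_normalizer_of_coprime [Finite G] {g y : G}
    (hy : y ∈ normalizer (zpowers g : Set G))
    (hcop : (orderOf y).Coprime (orderOf g).totient) : Commute y g := by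
  refine commute_of_mem_ker_normalizerMonoidHom (y := ⟨y, hy⟩) ?_
  rw [← orderOf_eq_one_iff]
  refine Nat.eq_one_of_dvd_coprimes hcop ?_ ?_
  · exact (orderOf_map_dvd _ _).trans (Subgroup.orderOf_mk y hy).dvd
  · rw [← Nat.card_zpowers g, ← IsCyclic.card_mulAut (zpowers g)]
    exact orderOf_dvd_natCard _

theorem smul_mem_fixedBy_of_mem_normalizer {g n : G}
    (hn : n ∈ normalizer (zpowers g : Set G)) {a : X} (ha : a ∈ fixedBy X g) :
    n • a ∈ fixedBy X g := by
  have hconj : n⁻¹ * g * n ∈ stabilizer G a :=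
    (zpowers_le.mpr ha : zpowers g ≤ stabilizer G a) <|
      (mem_normalizer_iff''.mp hn g).mp (mem_zpowers g)
  rwa [mem_stabilizer_iff, mul_smul, mul_smul, inv_smul_eq_iff] at hconj

theorem exists_conj_mem_of_not_dvd_index [Finite G] {p : ℕ} (hp : p.Prime) {H : Subgroup G}
    (hH : ¬ p ∣ H.index) {x : G} (hx : orderOf x = p) : ∃ z : G, z * x * z⁻¹ ∈ H := by
  have hcard := card_modEq_ncard_fixedBy (X := G ⧸ H) hp hx
  have hne : (fixedBy (G ⧸ H) x).Nonempty := by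
    rw [Set.nonempty_iff_ne_empty]
    intro h
    rw [h, Set.ncard_empty] at hcard
    exact hH (Nat.modEq_zero_iff_dvd.mp hcard)
  obtain ⟨⟨z⟩, hz⟩ := hne
  refine ⟨z⁻¹, ?_⟩
  rw [inv_inv, mul_assoc]
  exact QuotientGroup.eq.mp (Eq.symm hz)

theorem exists_conj_mem_zpowers [Finite G] {p : ℕ} (hp : p.Prime) (hG : ¬ p ^ 2 ∣ Nat.card G)
    {x y : G} (hx : orderOf x = p) (hy : orderOf y = p) : ∃ z : G, z * x * z⁻¹ ∈ zpowers y := by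
  refine exists_conj_mem_of_not_dvd_index hp (fun h => hG ?_) hx
  rw [← (zpowers y).card_mul_index, Nat.card_zpowers, hy, sq]
  exact mul_dvd_mul_left p h

theorem exists_mem_normalizer_smul_eq [Finite G] [IsPretransitive G X] {p : ℕ} (hp : p.Prime)
    {g : G} (hg : orderOf g = p) {a b : X} (ha : a ∈ fixedBy X g) (hb : b ∈ fixedBy X g)
    (hpb : ¬ p ^ 2 ∣ Nat.card (stabilizer G b)) :
    ∃ n ∈ normalizer (zpowers g : Set G), n • a = b := by
  obtain ⟨h, hab⟩ := exists_smul_eq G a b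
  have hconj : h * g * h⁻¹ ∈ stabilizer G b := by
    rw [mem_stabilizer_iff, mul_smul, mul_smul, inv_smul_eq_iff.mpr hab.symm, ha, hab]
  let x : stabilizer G b := ⟨h * g * h⁻¹, hconj⟩
  let y : stabilizer G b := ⟨g, hb⟩
  have hx : orderOf x = p := by
    rw [← Subgroup.orderOf_coe, ← hg]
    exact MulEquiv.orderOf_eq (MulAut.conj h) g
  have hy : orderOf y = p := by rwa [← Subgroup.orderOf_coe]
  obtain ⟨z, i, hz⟩ := exists_conj_mem_zpowers hp hpb hx hy
  have hzh : g ^ i = z * h * g * (z * h : G)⁻¹ := by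
    have hval : g ^ i = z * (h * g * h⁻¹) * (z : G)⁻¹ := congrArg Subtype.val hz
    rw [hval, mul_inv_rev]
    simp only [mul_assoc]
  refine ⟨z * h, mem_normalizer_fintype ?_, by rw [mul_smul, hab]; exact z.2⟩
  rintro - ⟨j, rfl⟩
  exact ⟨i * j, (zpow_mul g i j).trans (by rw [← conj_zpow, hzh])⟩

theorem ncard_fixedBy_dvd_card_normalizer [Finite G] [IsPretransitive G X] {p : ℕ} (hp : p.Prime)
    {g : G} (hg : orderOf g = p) (hG : ¬ p ^ 2 ∣ Nat.card G) (hfix : (fixedBy X g).Nonempty) :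
    (fixedBy X g).ncard ∣ Nat.card (normalizer (zpowers g : Set G)) := by
  obtain ⟨a, ha⟩ := hfix
  have horbit : fixedBy X g = orbit (normalizer (zpowers g : Set G)) a := by
    ext b
    constructor
    · intro hb
      obtain ⟨n, hn, hnab⟩ := exists_mem_normalizer_smul_eq hp hg ha hb
        fun h => hG (h.trans (stabilizer G b).card_subgroup_dvd_card)
      exact ⟨⟨n, hn⟩, hnab⟩
    · rintro ⟨n, rfl⟩
      exact smul_mem_fixedBy_of_mem_normalizer n.2 ha
  rw [horbit, ← index_stabilizer]
  exact index_dvd_card _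

end Normalizer

section Jordan

open MulAction Subgroup Equiv Equiv.Perm
open scoped commutatorElement

theorem not_sq_dvd_factorial {p : ℕ} (hp : p.Prime) : ¬ p ^ 2 ∣ p.factorial := by
  intro h
  obtain ⟨n, rfl⟩ := Nat.exists_eq_add_of_lt hp.pos
  rw [sq, zero_add, Nat.factorial_succ] at h
  have := (hp.dvd_factorial).mp (Nat.dvd_of_mul_dvd_mul_left n.succ_pos (by simpa using h))
  omega

theorem commutatorElement_apply_mul {α : Type*} (σ τ : Perm α) (x : α) :
    ⁅σ, τ⁆ ((τ * σ) x) = (σ * τ) x := by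
  rw [← Perm.mul_apply, commutatorElement_def]
  group

theorem not_sq_dvd_card_of_forall_apply_eq {α : Type*} {H : Subgroup (Perm α)} {s : Finset α}
    (hH : ∀ h ∈ H, ∀ x ∉ s, h x = x) (hp : s.card.Prime) : ¬ s.card ^ 2 ∣ Nat.card H := by
  classical
  have hle : H ≤ (ofSubtype : Perm s →* Perm α).range := by
    intro h hh
    have hmem (x : α) : h x ∈ s ↔ x ∈ s := by
      refine not_iff_not.mp ⟨fun hx => ?_, fun hx => (hH h hh x hx).symm ▸ hx⟩
      rwa [← h.injective (hH h hh _ hx)]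
    exact ⟨subtypePerm h hmem, ofSubtype_subtypePerm _ fun x hx =>
      not_imp_comm.mp (hH h hh x) hx⟩
  have hdvd : Nat.card H ∣ s.card.factorial := by
    have h := card_dvd_of_le hle
    rwa [← Nat.card_congr (MonoidHom.ofInjective ofSubtype_injective).toEquiv, Nat.card_perm,
      Nat.card_eq_fintype_card (α := s), Fintype.card_coe] at h
  exact fun h => not_sq_dvd_factorial hp (h.trans hdvd)

variable {α : Type*} [Fintype α] [DecidableEq α] {G : Subgroup (Perm α)} {g : Perm α}

theorem isMultiplyPretransitive_of_isCycle_mem (hG : IsPreprimitive G α) (hg : g.IsCycle)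
    (hgG : g ∈ G) (hp : g.support.card.Prime) (hfix : g.support ≠ Finset.univ) :
    IsMultiplyPretransitive G α g.supportᶜ.card := by
  have hcard : g.supportᶜ.card + g.support.card = Nat.card α := by
    rw [Nat.card_eq_fintype_card, add_comm, Finset.card_add_card_compl]
  have hs : ((g.support : Set α)ᶜ).ncard = g.supportᶜ.card := by
    rw [← Finset.coe_compl, Set.ncard_coe_finset]
  obtain ⟨n, hn⟩ : ∃ n, g.supportᶜ.card = n + 1 := by
    refine Nat.exists_eq_succ_of_ne_zero fun h => hfix ?_
    rwa [Finset.card_eq_zero, Finset.compl_eq_empty_iff] at h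
  have := isPretransitive_of_isCycle_mem hg hgG
  have hprime : (Nat.card (SubMulAction.ofFixingSubgroup G (g.support : Set α)ᶜ)).Prime := by
    convert hp
    rw [← Set.ncard_coe_finset, ← Nat.card_coe_set_eq]
    exact Nat.card_congr (Equiv.subtypeEquivRight fun x => by
      simp [SubMulAction.mem_ofFixingSubgroup_iff])
  have := hG.isMultiplyPreprimitive (hs.trans hn) (by have := hp.two_le; omega)
    (IsPreprimitive.of_prime_card hprime)
  rw [hn]
  exact isMultiplyPretransitive_of_le (n := n + 2) (by omega) (by have := hp.two_le; omega)

theorem exists_mem_normalizer_apply_eq (hG : IsPreprimitive G α) {g : G}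
    (hg : (g : Perm α).IsCycle) (hp : (g : Perm α).support.card.Prime)
    (hfix : (g : Perm α).support ≠ Finset.univ) {σ : Perm α} (hσ : σ.Disjoint g) :
    ∃ n ∈ normalizer (zpowers g : Set G), ∀ x ∉ (g : Perm α).support, (n : Perm α) x = σ x := by
  let s := (g : Perm α).support
  let : MulAction G (Fin sᶜ.card ↪ α) := Function.Embedding.instMulAction
  have : IsMultiplyPretransitive G α sᶜ.card :=
    isMultiplyPretransitive_of_isCycle_mem hG hg g.2 hp hfix
  let a : Fin sᶜ.card ↪ α := sᶜ.equivFin.symm.toEmbedding.trans (Function.Embedding.subtype _)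
  let b : Fin sᶜ.card ↪ α := a.trans σ.toEmbedding
  have ha {x : α} (hx : x ∉ s) : ∃ i, a i = x :=
    ⟨sᶜ.equivFin ⟨x, Finset.mem_compl.mpr hx⟩, by simp [a]⟩
  have hga (i) : (g : Perm α) (a i) = a i :=
    notMem_support.mp (Finset.mem_compl.mp (sᶜ.equivFin.symm i).2)
  have hgb (i) : (g : Perm α) (b i) = b i :=
    (Perm.congr_fun hσ.commute.eq (a i)).symm.trans (congrArg σ (hga i))
  have hstab : ¬ s.card ^ 2 ∣ Nat.card (stabilizer G a) := by
    rw [← card_map_of_injective G.subtype_injective (K := stabilizer G a)]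
    refine not_sq_dvd_card_of_forall_apply_eq ?_ hp
    rintro - ⟨h, hh, rfl⟩ x hx
    obtain ⟨i, rfl⟩ := ha hx
    exact DFunLike.congr_fun (mem_stabilizer_iff.mp hh) i
  obtain ⟨n, hn, hnb⟩ := exists_mem_normalizer_smul_eq (X := Fin sᶜ.card ↪ α) hp (g := g)
    (by rw [← hg.orderOf, ← Subgroup.orderOf_coe]) (Function.Embedding.ext hgb)
    (Function.Embedding.ext hga) hstab
  refine ⟨n⁻¹, inv_mem hn, fun x hx => ?_⟩
  obtain ⟨i, rfl⟩ := ha hx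
  exact Perm.inv_eq_iff_eq.mpr (DFunLike.congr_fun hnb i).symm

/- Elements of `G` inducing `σ` and `τ` off the support of `g` and normalizing `⟨g⟩` have a
commutator which centralizes `g`, and therefore acts on the support of `g` as a power of `g`. -/
theorem commutatorElement_mem_of_isCycle_mem (hG : IsPreprimitive G α) {g : G}
    (hg : (g : Perm α).IsCycle) (hp : (g : Perm α).support.card.Prime)
    (hfix : (g : Perm α).support ≠ Finset.univ) {σ τ : Perm α} (hσ : σ.Disjoint g)
    (hτ : τ.Disjoint g) : ⁅σ, τ⁆ ∈ G := by
  obtain ⟨a, ha, haσ⟩ := exists_mem_normalizer_apply_eq hG hg hp hfix hσ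
  obtain ⟨b, hb, hbτ⟩ := exists_mem_normalizer_apply_eq hG hg hp hfix hτ
  have hcomm := (commute_commutatorElement_of_mem_normalizer ha hb).map G.subtype
  obtain ⟨hmem, i, hi⟩ := hg.commute_iff.mp hcomm
  have hgi {x : α} : ((g : Perm α) ^ i) x ∈ (g : Perm α).support ↔ x ∈ (g : Perm α).support :=
    zpow_apply_mem_support
  have hdisj {x : α} (hx : x ∈ (g : Perm α).support) : ⁅σ, τ⁆ x = x :=
    (((hσ.mul_left hτ).mul_left hσ.inv_left).mul_left hτ.inv_left x).resolve_right
      (mem_support.mp hx)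
  have hoff {x : α} (hx : x ∉ (g : Perm α).support) {ρ : Perm α} (hρ : ρ.Disjoint g) :
      ρ x ∉ (g : Perm α).support := by
    rw [notMem_support, ← Perm.mul_apply, ← hρ.commute.eq, Perm.mul_apply, notMem_support.mp hx]
  suffices h : ⁅σ, τ⁆ * (g : Perm α) ^ i = ⁅(a : Perm α), (b : Perm α)⁆ from
    eq_mul_inv_of_mul_eq h ▸ (⁅a, b⁆ * (g ^ i)⁻¹).2
  ext x
  by_cases hx : x ∈ (g : Perm α).support
  · rw [Perm.mul_apply, hdisj (hgi.mpr hx)]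
    exact (Perm.congr_fun hi x).trans (ofSubtype_apply_of_mem _ hx)
  · have hgx : ((g : Perm α) ^ i) x = x := zpow_apply_eq_self_of_apply_eq_self (by simpa using hx) i
    obtain ⟨y, rfl⟩ := (τ * σ).surjective x
    have hy : y ∉ (g : Perm α).support := by
      simpa using hoff hx (ρ := (τ * σ)⁻¹) (hτ.mul_left hσ).inv_left
    have hba : (τ * σ) y = (b * a : Perm α) y := by
      rw [Perm.mul_apply, Perm.mul_apply, haσ y hy, hbτ _ (hoff hy hσ)]
    have hab : (σ * τ) y = (a * b : Perm α) y := by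
      rw [Perm.mul_apply, Perm.mul_apply, hbτ y hy, haσ _ (hoff hy hτ)]
    rw [Perm.mul_apply, hgx, commutatorElement_apply_mul, hab, hba, commutatorElement_apply_mul]

theorem alternatingGroup_le_of_isPreprimitive_of_isCycle_mem (hG : IsPreprimitive G α)
    (hg : g.IsCycle) (hgG : g ∈ G) (hp : g.support.card.Prime)
    (hfix : g.support.card + 3 ≤ Fintype.card α) : alternatingGroup α ≤ G := by
  obtain ⟨x, y, z, hx, hy, hz, hxy, hxz, hyz⟩ : ∃ x y z, x ∉ g.support ∧ y ∉ g.support ∧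
      z ∉ g.support ∧ x ≠ y ∧ x ≠ z ∧ y ≠ z := by
    rw [← Finset.card_add_card_compl g.support, add_le_add_iff_left] at hfix
    obtain ⟨x, y, z, hx, hy, hz, hne⟩ := Finset.two_lt_card_iff.mp hfix
    exact ⟨x, y, z, by simpa using hx, by simpa using hy, by simpa using hz, hne⟩
  have hswap {u v : α} (hu : u ∉ g.support) (hv : v ∉ g.support) : (swap u v).Disjoint g := by
    intro w
    by_cases hw : w = u ∨ w = v
    · exact Or.inr (notMem_support.mp (by rcases hw with rfl | rfl <;> assumption))
    · rw [not_or] at hw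
      exact Or.inl (swap_apply_of_ne_of_ne hw.1 hw.2)
  refine alternatingGroup_le_of_isPreprimitive_of_isThreeCycle_mem hG
    (isThreeCycle_swap_mul_swap_same hxy hxz hyz).isThreeCycle_sq ?_
  have hmem := commutatorElement_mem_of_isCycle_mem hG (g := ⟨g, hgG⟩) hg hp
    (fun h => hx (h ▸ Finset.mem_univ x)) (hswap hx hy) (hswap hx hz)
  simpa only [commutatorElement_def, swap_inv, mul_assoc] using hmem

theorem factorial_dvd_two_mul_card_of_alternatingGroup_le {G X : Type*} [Group G] [MulAction G X]
    [Fintype X] [DecidableEq X] [Nontrivial X]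
    (h : alternatingGroup X ≤ (toPermHom G X).range) : (Nat.card X).factorial ∣ 2 * Nat.card G := by
  rw [← Nat.card_perm, ← two_mul_nat_card_alternatingGroup]
  exact mul_dvd_mul_left 2 ((card_dvd_of_le h).trans (card_range_dvd _))

theorem isPreprimitive_range_toPermHom {G X : Type*} [Group G] [MulAction G X]
    [IsPreprimitive G X] : IsPreprimitive (toPermHom G X).range X :=
  IsPreprimitive.of_surjective (φ := (toPermHom G X).rangeRestrict)
    (f := { toFun := id, map_smul' := fun _ _ => rfl }) Function.surjective_id

theorem factorial_dvd_two_mul_card_of_isPreprimitive {G X : Type*} [Group G] [MulAction G X]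
    [Finite X] (hG : IsPreprimitive G X) {p : ℕ} (hp : p.Prime) {g : G} (hg : orderOf g = p)
    (hfix : 3 ≤ (fixedBy X g).ncard) (hcard : (fixedBy X g).ncard + p = Nat.card X) :
    (Nat.card X).factorial ∣ 2 * Nat.card G := by
  classical
  have := Fintype.ofFinite X
  have : Nontrivial X := Finite.one_lt_card_iff_nontrivial.mp (by omega)
  let φ := toPermHom G X
  have hsupp : (φ g).support.card = p := by
    have hcompl : fixedBy X g = ((φ g).support : Set X)ᶜ := by
      ext x
      simp [φ]
    have := Set.ncard_add_ncard_compl ((φ g).support : Set X)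
    rw [← hcompl, Set.ncard_coe_finset] at this
    omega
  have horder : orderOf (φ g) = p := by
    refine (hp.eq_one_or_self_of_dvd _ (hg ▸ orderOf_map_dvd φ g)).resolve_left fun h => ?_
    rw [orderOf_eq_one_iff.mp h, support_one, Finset.card_empty] at hsupp
    exact hp.ne_zero hsupp.symm
  have hcycle : (φ g).IsCycle :=
    isCycle_of_prime_order (horder ▸ hp) (by have := hp.pos; omega)
  exact factorial_dvd_two_mul_card_of_alternatingGroup_le <|
    alternatingGroup_le_of_isPreprimitive_of_isCycle_mem isPreprimitive_range_toPermHom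
      hcycle ⟨g, rfl⟩ (hsupp ▸ hp) (by rw [hsupp, ← Nat.card_eq_fintype_card]; omega)

end Jordan

section ThreeCycles

open MulAction Subgroup Equiv Equiv.Perm

theorem exists_isThreeCycle_mem_of_not_dvd_index {X : Type*} [Fintype X] [DecidableEq X]
    (hX : 3 ≤ Fintype.card X) {Q : Subgroup (Perm X)} (hQ : ¬ 3 ∣ Q.index) :
    ∃ q ∈ Q, q.IsThreeCycle := by
  obtain ⟨a, b, c, hab, hac, hbc⟩ := Fintype.two_lt_card_iff.mp hX
  have hcycle := isThreeCycle_swap_mul_swap_same hab hac hbc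
  obtain ⟨z, hz⟩ := exists_conj_mem_of_not_dvd_index Nat.prime_three hQ hcycle.orderOf
  exact ⟨_, hz, by rwa [IsThreeCycle, cycleType_conj]⟩

theorem factorial_dvd_two_mul_card_of_not_three_dvd_index {G X : Type*} [Group G] [MulAction G X]
    [Finite X] (hG : IsPreprimitive G X) (hX : 3 ≤ Nat.card X)
    (hindex : ¬ 3 ∣ (toPermHom G X).range.index) : (Nat.card X).factorial ∣ 2 * Nat.card G := by
  classical
  have := Fintype.ofFinite X
  have : Nontrivial X := Finite.one_lt_card_iff_nontrivial.mp (by omega)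
  obtain ⟨q, hqG, hq⟩ := exists_isThreeCycle_mem_of_not_dvd_index
    (Nat.card_eq_fintype_card (α := X) ▸ hX) hindex
  exact factorial_dvd_two_mul_card_of_alternatingGroup_le <|
    alternatingGroup_le_of_isPreprimitive_of_isThreeCycle_mem isPreprimitive_range_toPermHom
      hq hqG

end ThreeCycles

section Primitivity

open MulAction
open scoped Pointwise

variable {G X : Type*} [Group G] [MulAction G X]

theorem ncard_fixedBy_embedding [Finite X] (g : G) (n : ℕ) :
    (fixedBy (Fin n ↪ X) g).ncard = (fixedBy X g).ncard.descFactorial n := by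
  classical
  have := Fintype.ofFinite (fixedBy X g)
  have hcard := Fintype.card_embedding_eq (α := Fin n) (β := fixedBy X g)
  rw [Fintype.card_fin, ← Nat.card_eq_fintype_card, ← Nat.card_eq_fintype_card,
    Nat.card_coe_set_eq] at hcard
  rw [← hcard, ← Nat.card_coe_set_eq]
  exact Nat.card_congr
    { toFun := fun e => ⟨fun i => ⟨e.1 i, DFunLike.congr_fun e.2 i⟩, fun i j hij =>
        e.1.injective (congrArg Subtype.val hij)⟩
      invFun := fun e => ⟨e.trans (Function.Embedding.subtype _), by
        ext i
        exact (e i).2⟩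
      left_inv := fun e => rfl
      right_inv := fun e => rfl }

theorem descFactorial_ncard_fixedBy_dvd_card_normalizer [Finite G] [Finite X] {n p : ℕ}
    (hX : IsMultiplyPretransitive G X n) (hp : p.Prime) {g : G} (hg : orderOf g = p)
    (hG : ¬ p ^ 2 ∣ Nat.card G) (hn : n ≤ (fixedBy X g).ncard) :
    (fixedBy X g).ncard.descFactorial n ∣
      Nat.card (Subgroup.normalizer (Subgroup.zpowers g : Set G)) := by
  have : IsPretransitive G (Fin n ↪ X) := hX
  rw [← ncard_fixedBy_embedding]
  refine ncard_fixedBy_dvd_card_normalizer hp hg hG (Set.nonempty_of_ncard_ne_zero ?_)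
  rw [ncard_fixedBy_embedding]
  exact (Nat.descFactorial_pos.mpr hn).ne'

theorem isPretransitive_of_natCard_lt_two_mul_ncard_orbit [Finite X]
    (h : ∀ a : X, Nat.card X < 2 * (orbit G a).ncard) : IsPretransitive G X := by
  refine ⟨fun a b => ?_⟩
  by_contra hb
  have hdisj : Disjoint (orbit G a) (orbit G b) :=
    (orbit.eq_or_disjoint a b).resolve_left fun heq => hb (heq ▸ mem_orbit_self b : b ∈ orbit G a)
  have hle := Set.ncard_le_card (orbit G a ∪ orbit G b)
  rw [Set.ncard_union_eq hdisj] at hle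
  have := h a
  have := h b
  omega

/- The points fixed by the same elements of order `p` as `a` form a block. -/
theorem smul_eq_of_forall_orderOf_eq [Finite G] (hG : IsPreprimitive G X) {p : ℕ} {a b : X}
    (hab : a ≠ b) (h : ∀ g : G, orderOf g = p → g • a = a → g • b = b) {g : G}
    (hg : orderOf g = p) (hga : g • a = a) (x : X) : g • x = x := by
  let E : X →ₑ[ConjAct.toConjAct (G := G)] Set G :=
    { toFun := fun x => {g | orderOf g = p ∧ g • x = x}
      map_smul' := fun t x => by
        ext g
        rw [Set.mem_smul_set_iff_inv_smul_mem, ← map_inv, ConjAct.toConjAct_smul, inv_inv]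
        change orderOf g = p ∧ g • t • x = t • x ↔
          orderOf (t⁻¹ * g * t) = p ∧ (t⁻¹ * g * t) • x = x
        have horder : orderOf (t⁻¹ * g * t) = orderOf g := by
          simpa only [MulAut.conj_inv_apply] using MulEquiv.orderOf_eq (MulAut.conj t)⁻¹ g
        rw [horder, mul_smul, mul_smul, inv_smul_eq_iff] }
  have hEb : E b = E a := by
    obtain ⟨t, rfl⟩ := exists_smul_eq G a b
    have hsub : E a ⊆ E (t • a) := fun g hg => ⟨hg.1, h g hg.1 hg.2⟩
    refine (Set.eq_of_subset_of_ncard_le hsub ?_).symm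
    rw [map_smulₛₗ, Set.ncard_smul_set]
  have hblock : IsBlock G (E ⁻¹' {E a}) := IsBlock.singleton.preimage E
  have huniv := hblock.subsingleton_or_eq_univ.resolve_left fun hs => hab (hs rfl hEb)
  have hx : E x = E a := Set.eq_univ_iff_forall.mp huniv x
  have hgE : g ∈ E a := ⟨hg, hga⟩
  exact (hx ▸ hgE).2

theorem subset_fixedBy_of_isBlock [Finite X] {p : ℕ} (hp : p.Prime) {g : G} (hg : orderOf g = p)
    {Y : Set X} (hY : IsBlock G Y) (hlt : Y.ncard < p) {a : X} (haY : a ∈ Y)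
    (ha : a ∈ fixedBy X g) : Y ⊆ fixedBy X g := by
  have hgY : g • Y = Y := hY.smul_eq_of_mem haY (ha.symm ▸ haY)
  exact subset_fixedBy_of_ncard_lt hp hg (Set.toFinite Y)
    (fun y hy => hgY ▸ Set.smul_mem_smul_set hy) hlt

theorem isPreprimitive_of_forall_ncard [Finite X] [IsPretransitive G X] (a : X)
    (h : ∀ S : Set X, IsBlock G S → a ∈ S → S.ncard ∣ Nat.card X →
      S.ncard = 1 ∨ S.ncard = Nat.card X) : IsPreprimitive G X := by
  refine IsPreprimitive.of_isTrivialBlock_base a fun {S} ha hS => ?_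
  refine (h S hS ha (hS.ncard_dvd_card ⟨a, ha⟩)).imp (fun h1 => ?_) fun huniv => ?_
  · exact Set.ncard_le_one_iff_subsingleton.mp h1.le
  · rwa [Set.eq_univ_iff_ncard]

theorem isPreprimitive_of_ncard_fixedBy_lt_mod [Finite X] [IsPretransitive G X] {p : ℕ}
    (hp : p.Prime) {g : G} (hg : orderOf g = p) (hfix : (fixedBy X g).Nonempty)
    (h : ∀ m, m ∣ Nat.card X → m = 1 ∨ m = Nat.card X ∨ (fixedBy X g).ncard < m % p) :
    IsPreprimitive G X := by
  obtain ⟨a, ha⟩ := hfix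
  refine isPreprimitive_of_forall_ncard a fun S hS haS hdvd => ?_
  rcases h _ hdvd with h1 | huniv | hlt
  · exact Or.inl h1
  · exact Or.inr huniv
  · exfalso
    have hgS : g • S = S := hS.smul_eq_of_mem haS (ha.symm ▸ haS)
    have hmod := ncard_modEq_ncard_inter_fixedBy hp hg (Set.toFinite S)
      fun x hx => hgS ▸ Set.smul_mem_smul_set hx
    have hle : (S ∩ fixedBy X g).ncard ≤ (fixedBy X g).ncard :=
      Set.ncard_le_ncard Set.inter_subset_right
    rw [hmod] at hlt
    exact hlt.not_ge ((Nat.mod_le _ _).trans hle)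

theorem isPreprimitive_of_card_eq_sq [IsPretransitive G X] {p q : ℕ} (hp : p.Prime)
    (hq : q.Prime) (hqp : q < p) (hX : Nat.card X = q ^ 2) {g : G} (hg : orderOf g = p)
    (hpos : 0 < (fixedBy X g).ncard) (hne : (fixedBy X g).ncard ≠ q)
    (hlt : (fixedBy X g).ncard < 2 * q) : IsPreprimitive G X := by
  have : Finite X := Nat.finite_of_card_ne_zero (hX ▸ pow_ne_zero 2 hq.ne_zero)
  obtain ⟨a, ha⟩ := Set.nonempty_of_ncard_ne_zero hpos.ne'
  refine IsPreprimitive.of_isTrivialBlock_base a fun {Y} haY hY => ?_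
  obtain ⟨i, hi, hYi⟩ := (Nat.dvd_prime_pow hq).mp (hX ▸ hY.ncard_dvd_card ⟨a, haY⟩)
  have hfixed {Z : Set X} (hZ : IsBlock G Z) (hcard : Z.ncard = q) :
      ∀ b ∈ Z, b ∈ fixedBy X g → Z ⊆ fixedBy X g := fun b hbZ hb =>
    subset_fixedBy_of_isBlock hp hg hZ (hcard ▸ hqp) hbZ hb
  interval_cases i
  · exact Or.inl (Set.ncard_le_one_iff_subsingleton.mp hYi.le)
  · exfalso
    rw [pow_one] at hYi
    have hsub := hfixed hY hYi a haY ha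
    have hle := Set.ncard_le_ncard hsub
    obtain ⟨b, hb, hbY⟩ := Set.exists_mem_notMem_of_ncard_lt_ncard
      (by omega : Y.ncard < (fixedBy X g).ncard)
    obtain ⟨t, rfl⟩ := exists_smul_eq G a b
    have htY : t • a ∈ t • Y := Set.smul_mem_smul_set haY
    have htcard : (t • Y).ncard = q := by rw [Set.ncard_smul_set, hYi]
    have hsub' := hfixed (hY.translate t) htcard (t • a) htY hb
    have hdisj : Disjoint (t • Y) Y :=
      (hY.smul_eq_or_disjoint t).resolve_left fun h => hbY (h ▸ htY)
    have hle' := Set.ncard_le_ncard (Set.union_subset hsub' hsub)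
    rw [Set.ncard_union_eq hdisj] at hle'
    omega
  · exact Or.inr (by rw [Set.eq_univ_iff_ncard, hYi, hX])

end Primitivity

section DoubleCounting

variable {α β : Type*} {R : α → β → Prop} {S : Set α} {T : Set β} {m n : ℕ}

theorem ncard_mul_eq_ncard_mul (hS : S.Finite) (hT : T.Finite)
    (hm : ∀ a ∈ S, {b ∈ T | R a b}.ncard = m) (hn : ∀ b ∈ T, {a ∈ S | R a b}.ncard = n) :
    S.ncard * m = T.ncard * n := by
  classical
  lift S to Finset α using hS
  lift T to Finset β using hT
  rw [Set.ncard_coe_finset, Set.ncard_coe_finset]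
  refine Finset.card_mul_eq_card_mul R (fun a ha => ?_) fun b hb => ?_
  · rw [← hm a ha, ← Set.ncard_coe_finset, Finset.coe_bipartiteAbove]
    rfl
  · rw [← hn b hb, ← Set.ncard_coe_finset, Finset.coe_bipartiteBelow]
    rfl

theorem ncard_mul_le_ncard_mul (hS : S.Finite) (hT : T.Finite)
    (hm : ∀ a ∈ S, m ≤ {b ∈ T | R a b}.ncard) (hn : ∀ b ∈ T, {a ∈ S | R a b}.ncard ≤ n) :
    S.ncard * m ≤ T.ncard * n := by
  classical
  lift S to Finset α using hS
  lift T to Finset β using hT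
  rw [Set.ncard_coe_finset, Set.ncard_coe_finset]
  refine Finset.card_mul_le_card_mul R (fun a ha => ?_) fun b hb => ?_
  · refine (hm a ha).trans_eq ?_
    rw [← Set.ncard_coe_finset, Finset.coe_bipartiteAbove]
    rfl
  · refine Eq.trans_le ?_ (hn b hb)
    rw [← Set.ncard_coe_finset, Finset.coe_bipartiteBelow]
    rfl

theorem ncard_eq_ncard_mul_of_mapsTo (hS : S.Finite) (hT : T.Finite) {f : α → β}
    (hf : Set.MapsTo f S T) (hn : ∀ b ∈ T, {a ∈ S | f a = b}.ncard = n) :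
    S.ncard = T.ncard * n := by
  rw [← mul_one S.ncard]
  refine ncard_mul_eq_ncard_mul (R := fun a b => f a = b) hS hT (fun a ha => ?_) hn
  refine Set.ncard_eq_one.mpr ⟨f a, ?_⟩
  ext b
  exact ⟨fun h => h.2.symm, fun h => ⟨h ▸ hf ha, h.symm⟩⟩

end DoubleCounting

section PiCore

/-- The largest normal subgroup `O_π(G)` of a finite group `G` all of whose prime divisors belong to
`π`. -/
def piCore (π : Set ℕ) (G : Type*) [Group G] : Subgroup G :=
  sSup {N | N.Normal ∧ ∀ p : ℕ, p.Prime → p ∣ Nat.card N → p ∈ π}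

variable {π : Set ℕ} {G : Type*} [Group G]

theorem le_piCore {N : Subgroup G} (hN : N.Normal)
    (hπ : ∀ p : ℕ, p.Prime → p ∣ Nat.card N → p ∈ π) : N ≤ piCore π G :=
  le_sSup ⟨hN, hπ⟩

instance piCore_characteristic : (piCore π G).Characteristic := by
  rw [Subgroup.characteristic_iff_le_comap]
  intro φ
  refine sSup_le fun N ⟨hN, hπ⟩ => ?_
  rw [← Subgroup.map_le_iff_le_comap]
  refine le_piCore (hN.map φ.toMonoidHom φ.surjective) ?_
  rwa [Subgroup.card_map_of_injective φ.injective]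

theorem card_sup_dvd_card_mul_card (M N : Subgroup G) [N.Normal] :
    Nat.card (M ⊔ N : Subgroup G) ∣ Nat.card M * Nat.card N := by
  rw [← Subgroup.relIndex_bot_left, ← Subgroup.relIndex_mul_relIndex ⊥ N (M ⊔ N) bot_le
    le_sup_right, Subgroup.relIndex_sup_right, Subgroup.relIndex_bot_left, mul_comm]
  exact mul_dvd_mul_right (Subgroup.relIndex_dvd_card N M) _

theorem mem_of_prime_dvd_card_piCore [Finite G] {p : ℕ} (hp : p.Prime)
    (hdvd : p ∣ Nat.card (piCore π G)) : p ∈ π := by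
  let Q : Set (Subgroup G) := {N | N.Normal ∧ ∀ p : ℕ, p.Prime → p ∣ Nat.card N → p ∈ π}
  have hbot : ⊥ ∈ Q := ⟨inferInstance, fun q hq h => by
    rw [Subgroup.card_bot] at h
    exact absurd (Nat.dvd_one.mp h) hq.ne_one⟩
  have hsup : SupClosed Q := by
    rintro M ⟨hM, hMπ⟩ N ⟨hN, hNπ⟩
    refine ⟨Subgroup.sup_normal M N, fun q hq h => ?_⟩
    exact (hq.dvd_mul.mp (h.trans (card_sup_dvd_card_mul_card M N))).elim (hMπ q hq) (hNπ q hq)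
  have hmem : piCore π G ∈ Q := hsup.sSup_mem (Set.toFinite Q) hbot subset_rfl
  exact hmem.2 p hp hdvd

end PiCore

section Fibers

open MulAction

variable {G X Y : Type*} [Group G] [MulAction G X] [MulAction G Y] {f : X →[G] Y}

theorem mapsTo_fiber {g : G} {y : Y} (hg : g • y = y) :
    Set.MapsTo (g • ·) {x | f x = y} {x | f x = y} := by
  rintro x rfl
  exact (map_smul f g x).trans hg

theorem map_mem_fixedBy {g : G} {x : X} (hx : x ∈ fixedBy X g) : f x ∈ fixedBy Y g :=
  (map_smul f g x).symm.trans (congrArg f hx)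

/-- The fiber of an equivariant map over `y`, acted on by the stabilizer of `y`. -/
def fiberSubMulAction (f : X →[G] Y) (y : Y) : SubMulAction (stabilizer G y) X where
  carrier := {x | f x = y}
  smul_mem' g _ hx := mapsTo_fiber g.2 hx

theorem natCard_fiberSubMulAction (f : X →[G] Y) (y : Y) :
    Nat.card (fiberSubMulAction f y) = {x | f x = y}.ncard :=
  Nat.card_coe_set_eq _

instance isPretransitive_fiberSubMulAction [IsPretransitive G X] {y : Y} :
    IsPretransitive (stabilizer G y) (fiberSubMulAction f y) := by
  refine ⟨fun ⟨a, ha⟩ ⟨b, hb⟩ => ?_⟩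
  change f a = y at ha
  change f b = y at hb
  obtain ⟨g, rfl⟩ := exists_smul_eq G a b
  refine ⟨⟨g, ?_⟩, rfl⟩
  rw [mem_stabilizer_iff, ← ha, ← map_smul, hb, ha]

end Fibers

section Designs

open MulAction
open scoped Pointwise

/-- The incidence relation `I` between points and blocks defines a `2`-design with block size `k` in
which any two points lie on `lam` common blocks. -/
structure IsTwoDesign {Ω Bl : Type*} (I : Ω → Bl → Prop) (k lam : ℕ) : Prop where
  ncard_block (B : Bl) : {x | I x B}.ncard = k
  ncard_pair {x y : Ω} (hxy : x ≠ y) : {B | I x B ∧ I y B}.ncard = lam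

namespace IsTwoDesign

variable {Ω Bl : Type*} {I : Ω → Bl → Prop} {k lam : ℕ}

theorem ncard_mul_eq [Finite Ω] [Finite Bl] (D : IsTwoDesign I k lam) {α : Ω} {S : Set Ω} {n : ℕ}
    (hα : α ∉ S) (hS : ∀ B, I α B → {s ∈ S | I s B}.ncard = n) :
    S.ncard * lam = {B | I α B}.ncard * n := by
  refine ncard_mul_eq_ncard_mul S.toFinite (Set.toFinite _) (fun s hs => ?_) fun B hB => hS B hB
  exact D.ncard_pair fun h => hα (h ▸ hs)

theorem ncard_through_mul [Finite Ω] [Finite Bl] (D : IsTwoDesign I k lam) (α : Ω) :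
    {B | I α B}.ncard * (k - 1) = lam * (Nat.card Ω - 1) := by
  have hα : α ∉ ({α}ᶜ : Set Ω) := fun h => h rfl
  rw [← Set.ncard_singleton α, ← Set.ncard_compl, mul_comm lam]
  refine (D.ncard_mul_eq hα fun B hB => ?_).symm
  have hset : {s | s ∈ ({α}ᶜ : Set Ω) ∧ I s B} = {s | I s B} \ {α} := by
    ext s
    exact and_comm
  rw [hset, Set.ncard_sdiff_singleton_of_mem (s := {s | I s B}) hB, D.ncard_block,
    Set.ncard_singleton]

theorem exists_incident_incident (D : IsTwoDesign I k lam) (hlam : 1 ≤ lam) {x y : Ω}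
    (hxy : x ≠ y) : ∃ B, I x B ∧ I y B := by
  have hcard := D.ncard_pair hxy
  exact Set.nonempty_of_ncard_ne_zero (s := {B | I x B ∧ I y B}) (by omega)

end IsTwoDesign

/-- A `2`-design on which `G` acts flag-transitively together with a `G`-equivariant map `cl` from
the points to a set of classes, the classes having `c` points each and meeting every block in `0` or
`ℓ` points. This is Hypothesis (H), except that the action of `G` need not be faithful. -/
structure IsImprimitiveDesign (G : Type*) {Ω Bl C : Type*} [Group G] [MulAction G Ω]
    [MulAction G Bl] [MulAction G C] (I : Ω → Bl → Prop) (cl : Ω →[G] C) (k lam c ℓ : ℕ) : Prop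
    extends IsTwoDesign I k lam where
  smul_incident {g : G} {x : Ω} {B : Bl} : I x B → I (g • x) (g • B)
  exists_smul_eq_smul_eq {x y : Ω} {A B : Bl} : I x A → I y B → ∃ g : G, g • x = y ∧ g • A = B
  ncard_class (Δ : C) : {x | cl x = Δ}.ncard = c
  ncard_block_inter_class {x : Ω} {B : Bl} : I x B → {y | I y B ∧ cl y = cl x}.ncard = ℓ
  one_le_lam : 1 ≤ lam
  two_le_c : 2 ≤ c
  two_le_ℓ : 2 ≤ ℓ

namespace IsImprimitiveDesign

variable {G Ω Bl C : Type*} [Group G] [MulAction G Ω] [MulAction G Bl] [MulAction G C]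
  {I : Ω → Bl → Prop} {cl : Ω →[G] C} {k lam c ℓ : ℕ}

section Transitivity

theorem cl_surjective (D : IsImprimitiveDesign G I cl k lam c ℓ) : Function.Surjective cl := by
  intro Δ
  have hcard := D.ncard_class Δ
  have := D.two_le_c
  exact Set.nonempty_of_ncard_ne_zero (s := {x | cl x = Δ}) (by omega)

theorem exists_incident (D : IsImprimitiveDesign G I cl k lam c ℓ) (x : Ω) : ∃ B, I x B := by
  have hcard : 1 < {y | cl y = cl x}.ncard := (D.ncard_class (cl x)).symm ▸ D.two_le_c
  obtain ⟨y, -, hyx⟩ := Set.exists_ne_of_one_lt_ncard hcard x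
  obtain ⟨B, -, hB⟩ := D.exists_incident_incident D.one_le_lam hyx
  exact ⟨B, hB⟩

theorem exists_ne_incident (D : IsImprimitiveDesign G I cl k lam c ℓ) {x : Ω} {B : Bl}
    (hx : I x B) : ∃ y, y ≠ x ∧ I y B ∧ cl y = cl x := by
  have hcard : 1 < {y | I y B ∧ cl y = cl x}.ncard :=
    (D.ncard_block_inter_class hx).symm ▸ D.two_le_ℓ
  obtain ⟨y, hy, hyx⟩ := Set.exists_ne_of_one_lt_ncard hcard x
  exact ⟨y, hyx, hy⟩

theorem isPretransitive (D : IsImprimitiveDesign G I cl k lam c ℓ) : IsPretransitive G Ω := by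
  refine ⟨fun x y => ?_⟩
  obtain ⟨A, hA⟩ := D.exists_incident x
  obtain ⟨B, hB⟩ := D.exists_incident y
  obtain ⟨g, hg, -⟩ := D.exists_smul_eq_smul_eq hA hB
  exact ⟨g, hg⟩

theorem isPretransitive_classes (D : IsImprimitiveDesign G I cl k lam c ℓ) :
    IsPretransitive G C :=
  have := D.isPretransitive
  IsPretransitive.of_surjective_map D.cl_surjective inferInstance

theorem ncard_preimage_cl [Finite Ω] [Finite C] (D : IsImprimitiveDesign G I cl k lam c ℓ)
    (T : Set C) : (cl ⁻¹' T).ncard = T.ncard * c := by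
  refine ncard_eq_ncard_mul_of_mapsTo (Set.toFinite _) T.toFinite (fun _ h => h) fun Δ hΔ => ?_
  rw [← D.ncard_class Δ]
  congr 1
  ext x
  exact ⟨fun h => h.2, fun h => ⟨Set.mem_preimage.mpr (h.symm ▸ hΔ), h⟩⟩

theorem natCard_points [Finite Ω] [Finite C] (D : IsImprimitiveDesign G I cl k lam c ℓ) :
    Nat.card Ω = Nat.card C * c := by
  rw [← Set.ncard_univ, ← Set.ncard_univ, ← D.ncard_preimage_cl, Set.preimage_univ]

theorem ncard_classes_meeting_mul [Finite Ω] (D : IsImprimitiveDesign G I cl k lam c ℓ) (B : Bl) :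
    (cl '' {x | I x B}).ncard * ℓ = k := by
  rw [← D.ncard_block B]
  refine (ncard_eq_ncard_mul_of_mapsTo (Set.toFinite _) (Set.toFinite _)
    (Set.mapsTo_image cl _) ?_).symm
  rintro _ ⟨x, hx, rfl⟩
  exact D.ncard_block_inter_class hx

theorem ncard_through_dvd [Finite Ω] [Finite Bl] (D : IsImprimitiveDesign G I cl k lam c ℓ)
    {α : Ω} {S : Set Ω} (hα : α ∉ S)
    (hS : ∀ g : G, g • α = α → Set.MapsTo (g • ·) S S) :
    {B | I α B}.ncard ∣ lam * S.ncard := by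
  have hle {A B : Bl} (hA : I α A) (hB : I α B) :
      {s ∈ S | I s A}.ncard ≤ {s ∈ S | I s B}.ncard := by
    obtain ⟨g, hg, rfl⟩ := D.exists_smul_eq_smul_eq hA hB
    exact Set.ncard_le_ncard_of_injOn (g • ·) (fun s hs => ⟨hS g hg hs.1, D.smul_incident hs.2⟩)
      (MulAction.injective g).injOn
  obtain ⟨A, hA⟩ := D.exists_incident α
  rw [mul_comm, D.ncard_mul_eq hα fun B hB => (hle hB hA).antisymm (hle hA hB)]
  exact dvd_mul_right _ _

theorem ncard_through_dvd_sub_one [Finite Ω] [Finite Bl]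
    (D : IsImprimitiveDesign G I cl k lam c ℓ) {α : Ω} {S : Set Ω} (hα : α ∈ S)
    (hS : ∀ g : G, g • α = α → Set.MapsTo (g • ·) S S) :
    {B | I α B}.ncard ∣ lam * (S.ncard - 1) := by
  rw [← Set.ncard_sdiff_singleton_of_mem hα]
  refine D.ncard_through_dvd (fun h => h.2 rfl) fun g hg x hx => ⟨hS g hg hx.1, fun h => hx.2 ?_⟩
  exact smul_left_cancel g (Eq.trans h hg.symm)

theorem ncard_through_dvd_of_isBlock [Finite Ω] [Finite Bl]
    (D : IsImprimitiveDesign G I cl k lam c ℓ) {α : Ω} {S : Set Ω} (hα : α ∈ S)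
    (hS : IsBlock G S) : {B | I α B}.ncard ∣ lam * (S.ncard - 1) := by
  refine D.ncard_through_dvd_sub_one hα fun g hg x hx => ?_
  have hgS : g • S = S := hS.smul_eq_of_mem hα (hg.symm ▸ hα)
  exact hgS ▸ Set.smul_mem_smul_set hx

theorem isPreprimitive_classes [Finite Ω] [Finite Bl] [Finite C]
    (D : IsImprimitiveDesign G I cl k lam c ℓ) (α : Ω)
    (h : ∀ m, m ∣ Nat.card C → {B | I α B}.ncard ∣ lam * (m * c - 1) → m = 1 ∨ m = Nat.card C) :
    IsPreprimitive G C := by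
  have := D.isPretransitive_classes
  refine isPreprimitive_of_forall_ncard (cl α) fun S hS hα hdvd => h _ hdvd ?_
  rw [← D.ncard_preimage_cl]
  exact D.ncard_through_dvd_of_isBlock hα (hS.preimage cl)

theorem isPreprimitive_class [Finite Ω] [Finite Bl] (D : IsImprimitiveDesign G I cl k lam c ℓ)
    (α : Ω) (h : ∀ m, m ∣ c → {B | I α B}.ncard ∣ lam * (m - 1) → m = 1 ∨ m = c) :
    IsPreprimitive (stabilizer G (cl α)) (fiberSubMulAction cl (cl α)) := by
  have := D.isPretransitive
  have hcard : Nat.card (fiberSubMulAction cl (cl α)) = c :=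
    (natCard_fiberSubMulAction cl _).trans (D.ncard_class _)
  let a : fiberSubMulAction cl (cl α) := ⟨α, rfl⟩
  refine isPreprimitive_of_forall_ncard a fun S hS ha hdvd => ?_
  rw [hcard] at hdvd ⊢
  refine h _ hdvd ?_
  rw [← Set.ncard_image_of_injective S Subtype.val_injective]
  refine D.ncard_through_dvd_sub_one ⟨a, ha, rfl⟩ ?_
  rintro g hg - ⟨x, hx, rfl⟩
  let g' : stabilizer G (cl α) := ⟨g, map_mem_fixedBy hg⟩
  have hga : g' • a = a := Subtype.ext hg
  have hgS : g' • S = S := hS.smul_eq_of_mem ha (hga.symm ▸ ha)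
  exact ⟨g' • x, hgS ▸ Set.smul_mem_smul_set hx, rfl⟩

theorem dvd_card_stabilizer_class [Finite Ω] (D : IsImprimitiveDesign G I cl k lam c ℓ) (Δ : C) :
    c ∣ Nat.card (stabilizer G Δ) := by
  have := D.isPretransitive
  obtain ⟨x, rfl⟩ := D.cl_surjective Δ
  rw [← D.ncard_class (cl x), ← natCard_fiberSubMulAction,
    ← index_stabilizer_of_transitive (stabilizer G (cl x)) (⟨x, rfl⟩ : fiberSubMulAction cl (cl x))]
  exact Subgroup.index_dvd_card _

end Transitivity

section PrimeOrder

variable {p : ℕ} {g : G}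

theorem mapsTo_incident (D : IsImprimitiveDesign G I cl k lam c ℓ) {B : Bl} (hB : g • B = B) :
    Set.MapsTo (g • ·) {x | I x B} {x | I x B} :=
  fun _ hx => hB.subst (D.smul_incident hx)

theorem mapsTo_classes_meeting (D : IsImprimitiveDesign G I cl k lam c ℓ) {B : Bl}
    (hB : g • B = B) : Set.MapsTo (g • ·) (cl '' {x | I x B}) (cl '' {x | I x B}) := by
  rintro _ ⟨x, hx, rfl⟩
  exact ⟨g • x, D.mapsTo_incident hB hx, map_smul cl g x⟩

theorem smul_block_eq [Finite Bl] (D : IsImprimitiveDesign G I cl k lam c ℓ) (hp : p.Prime)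
    (hlam : lam < p) (hg : orderOf g = p) {x y : Ω} (hxy : x ≠ y) (hx : g • x = x)
    (hy : g • y = y) {B : Bl} (hxB : I x B) (hyB : I y B) : g • B = B := by
  have hmaps : Set.MapsTo (g • ·) {A | I x A ∧ I y A} {A | I x A ∧ I y A} := fun A hA =>
    ⟨hx.subst (motive := fun z => I z (g • A)) (D.smul_incident hA.1),
      hy.subst (motive := fun z => I z (g • A)) (D.smul_incident hA.2)⟩
  exact subset_fixedBy_of_ncard_lt hp hg (Set.toFinite _) hmaps
    ((D.ncard_pair hxy).trans_lt hlam) ⟨hxB, hyB⟩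

theorem smul_point_eq [Finite Ω] (D : IsImprimitiveDesign G I cl k lam c ℓ) (hp : p.Prime)
    (hℓ : ℓ < p) (hg : orderOf g = p) {B : Bl} (hB : g • B = B) {x : Ω} (hx : I x B)
    (hcl : g • cl x = cl x) : g • x = x := by
  have hmaps : Set.MapsTo (g • ·) {y | I y B ∧ cl y = cl x} {y | I y B ∧ cl y = cl x} :=
    (D.mapsTo_incident hB).inter_inter (mapsTo_fiber hcl)
  exact subset_fixedBy_of_ncard_lt hp hg (Set.toFinite _) hmaps
    ((D.ncard_block_inter_class hx).trans_lt hℓ) ⟨hx, rfl⟩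

theorem ncard_through_meeting_mul [Finite Ω] [Finite Bl]
    (D : IsImprimitiveDesign G I cl k lam c ℓ) {γ : Ω} {Δ : C} (hγ : cl γ ≠ Δ) :
    {B | I γ B ∧ Δ ∈ cl '' {x | I x B}}.ncard * ℓ = lam * c := by
  rw [← D.ncard_class Δ, mul_comm lam]
  refine ncard_mul_eq_ncard_mul (R := fun B x => I x B) (Set.toFinite _) (Set.toFinite _)
    ?_ fun x hx => ?_
  · rintro B ⟨-, x, hx, rfl⟩
    rw [← D.ncard_block_inter_class hx]
    exact congrArg Set.ncard (Set.inter_comm _ _)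
  · rw [← D.ncard_pair (x := γ) (y := x) fun h => hγ (h ▸ hx)]
    congr 1
    ext B
    exact ⟨fun h => ⟨h.1.1, h.2⟩, fun h => ⟨⟨h.1, x, h.2, hx⟩, h.2⟩⟩

-- A moved point `γ` would share with `g • γ` all the blocks on `γ` that meet `Δ`, which are more
-- than `lam` many.
theorem eq_one_of_class_subset_fixedBy [Finite Ω] [Finite Bl] [FaithfulSMul G Ω]
    (D : IsImprimitiveDesign G I cl k lam c ℓ) (hp : p.Prime) (hlam : lam < p) (hℓc : ℓ < c)
    (hg : orderOf g = p) {Δ : C} (hΔ : {x | cl x = Δ} ⊆ fixedBy Ω g) : g = 1 := by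
  refine eq_of_smul_eq_smul fun γ : Ω => ?_
  rw [one_smul]
  by_cases hγ : cl γ = Δ
  · exact hΔ hγ
  by_contra hne
  have hle : {B | I γ B ∧ Δ ∈ cl '' {x | I x B}}.ncard ≤ lam := by
    rw [← D.ncard_pair hne]
    refine Set.ncard_le_ncard ?_
    rintro B ⟨hγB, x, hxB, rfl⟩
    obtain ⟨y, hyx, hyB, hy⟩ := D.exists_ne_incident hxB
    exact ⟨D.mapsTo_incident (D.smul_block_eq hp hlam hg hyx (hΔ hy) (hΔ rfl) hyB hxB) hγB, hγB⟩
  have hmul : lam * c ≤ lam * ℓ :=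
    (D.ncard_through_meeting_mul hγ).symm.trans_le (Nat.mul_le_mul_right ℓ hle)
  exact absurd (Nat.le_of_mul_le_mul_left hmul D.one_le_lam) (by omega)

theorem eq_one_of_smul_class_eq [Finite Ω] [Finite Bl] [FaithfulSMul G Ω]
    (D : IsImprimitiveDesign G I cl k lam c ℓ) (hp : p.Prime) (hlam : lam < p) (hℓc : ℓ < c)
    (hcp : c < p) (hg : orderOf g = p) {Δ : C} (hΔ : g • Δ = Δ) : g = 1 :=
  D.eq_one_of_class_subset_fixedBy hp hlam hℓc hg <|
    subset_fixedBy_of_ncard_lt hp hg (Set.toFinite _) (mapsTo_fiber hΔ) <|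
      (D.ncard_class Δ).trans_lt hcp

theorem ncard_class_inter_fixedBy_lt [Finite Ω] [Finite Bl] [FaithfulSMul G Ω]
    (D : IsImprimitiveDesign G I cl k lam c ℓ) (hp : p.Prime) (hlam : lam < p) (hℓc : ℓ < c)
    (hg : orderOf g = p) (Δ : C) : ({x | cl x = Δ} ∩ fixedBy Ω g).ncard < c := by
  rw [← D.ncard_class Δ]
  refine Set.ncard_lt_ncard (Set.inter_ssubset_left_iff.mpr fun hsub => ?_)
  exact ne_one_of_orderOf_eq_prime hp hg (D.eq_one_of_class_subset_fixedBy hp hlam hℓc hg hsub)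

theorem modEq_ncard_class_inter_fixedBy [Finite Ω] (D : IsImprimitiveDesign G I cl k lam c ℓ)
    (hp : p.Prime) (hg : orderOf g = p) {Δ : C} (hΔ : g • Δ = Δ) :
    c ≡ ({x | cl x = Δ} ∩ fixedBy Ω g).ncard [MOD p] :=
  D.ncard_class Δ ▸ ncard_modEq_ncard_inter_fixedBy hp hg (Set.toFinite _) (mapsTo_fiber hΔ)

theorem modEq_ncard_classes_meeting_inter_fixedBy [Finite Ω]
    (D : IsImprimitiveDesign G I cl k lam c ℓ) (hp : p.Prime) (hg : orderOf g = p) {B : Bl}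
    (hB : g • B = B) :
    (cl '' {x | I x B}).ncard ≡ (cl '' {x | I x B} ∩ fixedBy C g).ncard [MOD p] :=
  ncard_modEq_ncard_inter_fixedBy hp hg (Set.toFinite _) (D.mapsTo_classes_meeting hB)

theorem ncard_block_inter_fixedBy [Finite Ω] (D : IsImprimitiveDesign G I cl k lam c ℓ)
    (hp : p.Prime) (hℓ : ℓ < p) (hg : orderOf g = p) {B : Bl} (hB : g • B = B) :
    ({x | I x B} ∩ fixedBy Ω g).ncard = (cl '' {x | I x B} ∩ fixedBy C g).ncard * ℓ := by
  refine ncard_eq_ncard_mul_of_mapsTo (f := cl) (Set.toFinite _) (Set.toFinite _)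
    (fun x hx => ⟨⟨x, hx.1, rfl⟩, map_mem_fixedBy hx.2⟩) ?_
  rintro _ ⟨⟨x, hx, rfl⟩, hcl⟩
  rw [← D.ncard_block_inter_class hx]
  congr 1
  ext y
  refine ⟨fun h => ⟨h.1.1, h.2⟩, fun h => ⟨⟨h.1, ?_⟩, h.2⟩⟩
  exact D.smul_point_eq hp hℓ hg hB h.1 (h.2.symm ▸ hcl)

theorem ncard_fixedBy_points [Finite Ω] [Finite C] {s : ℕ}
    (hs : ∀ Δ : C, g • Δ = Δ → ({x | cl x = Δ} ∩ fixedBy Ω g).ncard = s) :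
    (fixedBy Ω g).ncard = (fixedBy C g).ncard * s :=
  ncard_eq_ncard_mul_of_mapsTo (Set.toFinite _) (Set.toFinite _) (fun _ => map_mem_fixedBy)
    fun Δ hΔ => (congrArg Set.ncard (Set.inter_comm _ _)).trans (hs Δ hΔ)

theorem ncard_fixedBy_through_pair [Finite Bl] (D : IsImprimitiveDesign G I cl k lam c ℓ)
    (hp : p.Prime) (hlam : lam < p) (hg : orderOf g = p) {α s : Ω} (hα : g • α = α)
    (hs : g • s = s) (hne : α ≠ s) :
    {B ∈ {B | I α B} ∩ fixedBy Bl g | I s B}.ncard = lam := by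
  rw [← D.ncard_pair hne]
  congr 1
  ext B
  exact ⟨fun h => ⟨h.1.1, h.2⟩,
    fun h => ⟨⟨h.1, D.smul_block_eq hp hlam hg hne hα hs h.1 h.2⟩, h.2⟩⟩

theorem ncard_fixedBy_through_mul [Finite Ω] [Finite Bl]
    (D : IsImprimitiveDesign G I cl k lam c ℓ) (hp : p.Prime) (hlam : lam < p) (hℓ : ℓ < p)
    (hg : orderOf g = p) {α : Ω} (hα : g • α = α) :
    ({B | I α B} ∩ fixedBy Bl g).ncard * (ℓ - 1) =
      lam * (({x | cl x = cl α} ∩ fixedBy Ω g).ncard - 1) := by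
  rw [← Set.ncard_sdiff_singleton_of_mem (s := {x | cl x = cl α} ∩ fixedBy Ω g) ⟨rfl, hα⟩,
    mul_comm lam]
  refine (ncard_mul_eq_ncard_mul (R := I) (Set.toFinite _) (Set.toFinite _) ?_ ?_).symm
  · exact fun s hs =>
      D.ncard_fixedBy_through_pair hp hlam hg hα hs.1.2 fun h => hs.2 h.symm
  · rintro B ⟨hαB, hB⟩
    rw [← D.ncard_block_inter_class hαB,
      ← Set.ncard_sdiff_singleton_of_mem (s := {y | I y B ∧ cl y = cl α}) ⟨hαB, rfl⟩]
    congr 1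
    ext y
    refine ⟨fun h => ⟨⟨h.2, h.1.1.1⟩, h.1.2⟩, fun h => ⟨⟨⟨h.1.2, ?_⟩, h.2⟩, h.1.1⟩⟩
    refine D.smul_point_eq hp hℓ hg hB h.1.1 ?_
    rw [h.1.2]
    exact map_mem_fixedBy hα

theorem mul_ncard_fixedBy_le [Finite Ω] [Finite Bl] (D : IsImprimitiveDesign G I cl k lam c ℓ)
    (hp : p.Prime) (hlam : lam < p) (hℓ : ℓ < p) (hg : orderOf g = p) {α : Ω} (hα : g • α = α)
    {m : ℕ}
    (hm : ∀ B, g • B = B → (cl '' {x | I x B} ∩ fixedBy C g).ncard ≤ m) :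
    ((fixedBy Ω g).ncard - 1) * lam ≤ ({B | I α B} ∩ fixedBy Bl g).ncard * (m * ℓ - 1) := by
  rw [← Set.ncard_sdiff_singleton_of_mem (show α ∈ fixedBy Ω g from hα)]
  refine ncard_mul_le_ncard_mul (R := I) (Set.toFinite _) (Set.toFinite _) ?_ ?_
  · exact fun s hs =>
      (D.ncard_fixedBy_through_pair hp hlam hg hα hs.1 fun h => hs.2 h.symm).ge
  · rintro B ⟨hαB, hB⟩
    have hset : {s ∈ fixedBy Ω g \ {α} | I s B} = ({x | I x B} ∩ fixedBy Ω g) \ {α} := by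
      ext s
      exact ⟨fun h => ⟨⟨h.2, h.1.1⟩, h.1.2⟩, fun h => ⟨⟨h.1.2, h.2⟩, h.1.1⟩⟩
    rw [hset, Set.ncard_sdiff_singleton_of_mem (s := {x | I x B} ∩ fixedBy Ω g) ⟨hαB, hα⟩,
      D.ncard_block_inter_fixedBy hp hℓ hg hB]
    exact Nat.sub_le_sub_right (Nat.mul_le_mul_right ℓ (hm B hB)) 1

end PrimeOrder

section Kernel

theorem smul_class_of_mem_ker {g : G} (hg : g ∈ (toPermHom G C).ker) (Δ : C) : g • Δ = Δ :=
  Equiv.Perm.congr_fun hg Δ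

theorem normal_fixingSubgroup_class (cl : Ω →[G] C) (Δ : C) :
    (fixingSubgroup (toPermHom G C).ker {x | cl x = Δ}).Normal := by
  refine ⟨fun a ha b => (mem_fixingSubgroup_iff _).mpr fun x hx => ?_⟩
  have hbx : b⁻¹ • x ∈ {x | cl x = Δ} := mapsTo_fiber (smul_class_of_mem_ker b⁻¹.2 Δ) hx
  rw [mul_smul, mul_smul, (mem_fixingSubgroup_iff _).mp ha _ hbx, smul_inv_smul]

theorem fixingSubgroup_class_le_piCore [Finite G] [Finite Ω] [Finite Bl] [FaithfulSMul G Ω]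
    (D : IsImprimitiveDesign G I cl k lam c ℓ) (hℓc : ℓ < c) (Δ : C) :
    fixingSubgroup (toPermHom G C).ker {x | cl x = Δ} ≤
      piCore (Set.Iic lam) (toPermHom G C).ker := by
  refine le_piCore (normal_fixingSubgroup_class cl Δ) fun p hp hdvd => ?_
  by_contra hlam
  have := Fact.mk hp
  obtain ⟨a, ha⟩ := exists_prime_orderOf_dvd_card' p hdvd
  rw [← orderOf_submonoid, ← Subgroup.orderOf_coe] at ha
  exact ne_one_of_orderOf_eq_prime hp ha <|
    D.eq_one_of_class_subset_fixedBy hp (not_le.mp hlam) hℓc ha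
      fun x hx => (mem_fixingSubgroup_iff _).mp a.2 x hx

/-- The largest normal subgroup of the kernel on the classes all of whose prime divisors are at most
`lam`, as a subgroup of `G`. -/
def kernelCore (G C : Type*) [Group G] [MulAction G C] (lam : ℕ) : Subgroup G :=
  (piCore (Set.Iic lam) (toPermHom G C).ker).map (toPermHom G C).ker.subtype

instance normal_kernelCore : (kernelCore G C lam).Normal :=
  ConjAct.normal_of_characteristic_of_normal

theorem smul_eq_of_mem_kernelCore [Finite G] [Finite Ω] [Finite Bl]
    (D : IsImprimitiveDesign G I cl k lam c ℓ) {α : Ω}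
    (hnum : ∀ m ≤ c, {B | I α B}.ncard ∣ lam * (m - 1) →
      (∀ p : ℕ, p.Prime → p ∣ m → p ≤ lam) → m = 1)
    {g : G} (hg : g ∈ kernelCore G C lam) : g • α = α := by
  have := D.isPretransitive
  let O : Set Ω := orbit (kernelCore G C lam) α
  have hα : α ∈ O := mem_orbit_self α
  have hOc : O.ncard ≤ c := by
    rw [← D.ncard_class (cl α)]
    refine Set.ncard_le_ncard ?_
    rintro _ ⟨⟨_, b, -, rfl⟩, rfl⟩
    exact mapsTo_fiber (smul_class_of_mem_ker b.2 (cl α)) rfl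
  have hdvd : O.ncard ∣ Nat.card (piCore (Set.Iic lam) (toPermHom G C).ker) := by
    rw [← Subgroup.card_map_of_injective (toPermHom G C).ker.subtype_injective]
    exact (index_stabilizer (kernelCore G C lam) α).symm.dvd.trans (Subgroup.index_dvd_card _)
  have hO : O.ncard = 1 :=
    hnum _ hOc (D.ncard_through_dvd_of_isBlock hα (IsBlock.orbit_of_normal α)) fun p hp hpO =>
      Set.mem_Iic.mp (mem_of_prime_dvd_card_piCore hp (hpO.trans hdvd))
  exact Set.ncard_le_one_iff_subsingleton.mp hO.le (mem_orbit α (⟨g, hg⟩ : kernelCore G C lam)) hα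

theorem eq_one_of_smul_classes_eq [Finite G] [Finite Ω] [Finite Bl] [FaithfulSMul G Ω]
    (D : IsImprimitiveDesign G I cl k lam c ℓ) (hℓc : ℓ < c)
    (hnum : ∀ α, ∀ m ≤ c, {B | I α B}.ncard ∣ lam * (m - 1) →
      (∀ p : ℕ, p.Prime → p ∣ m → p ≤ lam) → m = 1)
    {g : G} (hgC : ∀ Δ : C, g • Δ = Δ) {Δ : C} (hg : ∀ x, cl x = Δ → g • x = x) : g = 1 := by
  let g' : (toPermHom G C).ker := ⟨g, Equiv.Perm.ext hgC⟩
  have hfix : g' ∈ fixingSubgroup (toPermHom G C).ker {x | cl x = Δ} :=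
    (mem_fixingSubgroup_iff _).mpr hg
  have hcore : g ∈ kernelCore G C lam :=
    Subgroup.mem_map_of_mem _ (D.fixingSubgroup_class_le_piCore hℓc Δ hfix)
  refine eq_of_smul_eq_smul fun α : Ω => ?_
  rw [one_smul, D.smul_eq_of_mem_kernelCore (hnum α) hcore]

end Kernel

section FewClasses

theorem ncard_through_eq [Finite Ω] [Finite Bl] [Finite C]
    (D : IsImprimitiveDesign G I cl k lam c ℓ) {r : ℕ}
    (hr : r * (k - 1) = lam * (Nat.card C * c - 1)) (α : Ω) : {B | I α B}.ncard = r := by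
  obtain ⟨B, hB⟩ := D.exists_incident α
  have hℓk : ℓ ≤ k := by
    rw [← D.ncard_block_inter_class hB, ← D.ncard_block B]
    exact Set.ncard_le_ncard fun _ h => h.1
  have hk : 0 < k - 1 := by
    have := D.two_le_ℓ
    omega
  refine Nat.eq_of_mul_eq_mul_right hk ?_
  rw [D.ncard_through_mul, D.natCard_points, hr]

theorem faithfulSMul_points [FaithfulSMul G C] (D : IsImprimitiveDesign G I cl k lam c ℓ) :
    FaithfulSMul G Ω := by
  refine ⟨fun {a b} hab => eq_of_smul_eq_smul fun Δ : C => ?_⟩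
  obtain ⟨x, rfl⟩ := D.cl_surjective Δ
  rw [← map_smul, ← map_smul, hab]

theorem exists_orderOf_eq_smul_class_eq [Finite G] [Finite Ω]
    (D : IsImprimitiveDesign G I cl k lam c ℓ) {p : ℕ} (hp : p.Prime) (hpc : p ∣ c) (Δ : C) :
    ∃ g : G, orderOf g = p ∧ g • Δ = Δ :=
  exists_orderOf_eq_smul_eq hp (hpc.trans (D.dvd_card_stabilizer_class Δ))

theorem factorial_dvd_two_mul_card_of_isPreprimitive_classes [Finite G] [Finite Ω] [Finite C]
    [FaithfulSMul G C] (D : IsImprimitiveDesign G I cl k lam c ℓ) (hG : IsPreprimitive G C) {p : ℕ}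
    (hp : p.Prime) (hpc : p ∣ c) (hlow : p + 3 ≤ Nat.card C) (hupp : Nat.card C ≤ 2 * p) :
    (Nat.card C).factorial ∣ 2 * Nat.card G := by
  obtain ⟨Δ⟩ : Nonempty C := (Nat.card_pos_iff.mp (by omega)).1
  obtain ⟨g, hg, hgΔ⟩ := D.exists_orderOf_eq_smul_class_eq hp hpc Δ
  have hcard := ncard_fixedBy_add_eq hp hg ⟨Δ, hgΔ⟩ hupp
  exact factorial_dvd_two_mul_card_of_isPreprimitive hG hp hg (by omega) hcard

theorem not_faithfulSMul_of_ten_classes_of_ten_points [Finite G] [Finite Ω] [Finite Bl] [Finite C]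
    (D : IsImprimitiveDesign G I cl 12 lam 10 2) (hlam : lam = 3 ∨ lam = 4)
    (hC : Nat.card C = 10) : ¬ FaithfulSMul G C := by
  intro _
  obtain ⟨Δ⟩ : Nonempty C := (Nat.card_pos_iff.mp (by omega)).1
  obtain ⟨α, rfl⟩ := D.cl_surjective Δ
  have hprim : IsPreprimitive G C := by
    refine D.isPreprimitive_classes α fun m hm hdvd => ?_
    rw [D.ncard_through_eq (r := 9 * lam) (by rw [hC]; omega)] at hdvd
    rw [hC] at hm ⊢
    have hle : m ≤ 10 := Nat.le_of_dvd (by norm_num) hm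
    rcases hlam with rfl | rfl <;> interval_cases m <;> omega
  have hfact := D.factorial_dvd_two_mul_card_of_isPreprimitive_classes hprim Nat.prime_five
    (by norm_num) (by omega) (by omega)
  obtain ⟨y, hy⟩ := exists_orderOf_eq_of_factorial_dvd Nat.prime_seven (by norm_num)
    (by omega) hfact
  have hfix : (fixedBy C y).ncard = 3 := by
    have hmod := card_modEq_ncard_fixedBy (X := C) Nat.prime_seven hy
    have hlt := ncard_fixedBy_lt (X := C) (ne_one_of_orderOf_eq_prime Nat.prime_seven hy)
    rw [hC] at hmod hlt
    unfold Nat.ModEq at hmod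
    omega
  obtain ⟨Δ, hΔ⟩ : (fixedBy C y).Nonempty := Set.nonempty_of_ncard_ne_zero (by omega)
  have hclass := D.modEq_ncard_class_inter_fixedBy Nat.prime_seven hy hΔ
  unfold Nat.ModEq at hclass
  obtain ⟨β, γ, hβ, hγ, hne⟩ := (Set.one_lt_ncard_iff (Set.toFinite _)).mp
    (show 1 < ({x | cl x = Δ} ∩ fixedBy Ω y).ncard by omega)
  obtain ⟨B, hβB, hγB⟩ := D.exists_incident_incident D.one_le_lam hne
  have hB := D.smul_block_eq Nat.prime_seven (by omega) hy hne hβ.2 hγ.2 hβB hγB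
  have hmeet := D.ncard_classes_meeting_mul B
  have hsub : cl '' {x | I x B} ⊆ fixedBy C y :=
    subset_fixedBy_of_ncard_lt Nat.prime_seven hy (Set.toFinite _) (D.mapsTo_classes_meeting hB)
      (by omega)
  have := Set.ncard_le_ncard hsub
  omega

theorem not_faithfulSMul_of_twentyOne_classes [Finite G] [Finite Ω] [Finite Bl] [Finite C]
    (D : IsImprimitiveDesign G I cl 24 4 11 2) (hC : Nat.card C = 21) : ¬ FaithfulSMul G C := by
  intro _
  have := D.faithfulSMul_points
  obtain ⟨Δ⟩ : Nonempty C := (Nat.card_pos_iff.mp (by omega)).1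
  obtain ⟨α, rfl⟩ := D.cl_surjective Δ
  have hprim : IsPreprimitive G C := by
    refine D.isPreprimitive_classes α fun m hm hdvd => ?_
    rw [D.ncard_through_eq (r := 40) (by rw [hC])] at hdvd
    rw [hC] at hm ⊢
    have hle : m ≤ 21 := Nat.le_of_dvd (by norm_num) hm
    interval_cases m <;> omega
  have hfact := D.factorial_dvd_two_mul_card_of_isPreprimitive_classes hprim Nat.prime_eleven
    dvd_rfl (by omega) (by omega)
  have h19 : Nat.Prime 19 := by norm_num
  obtain ⟨y, hy⟩ := exists_orderOf_eq_of_factorial_dvd h19 (by norm_num) (by omega) hfact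
  have hmod := card_modEq_ncard_fixedBy (X := C) h19 hy
  rw [hC] at hmod
  unfold Nat.ModEq at hmod
  obtain ⟨Δ, hΔ⟩ : (fixedBy C y).Nonempty := Set.nonempty_of_ncard_ne_zero (by omega)
  exact ne_one_of_orderOf_eq_prime h19 hy
    (D.eq_one_of_smul_class_eq h19 (by norm_num) (by norm_num) (by norm_num) hy hΔ)

theorem smul_class_ne_of_orderOf_eq_five [Finite Ω] [Finite Bl] [Finite C] [FaithfulSMul G C]
    (D : IsImprimitiveDesign G I cl 32 4 28 4) (hC : Nat.card C = 10) {g : G}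
    (hg : orderOf g = 5) (Δ : C) : g • Δ ≠ Δ := by
  intro hΔ
  have := D.faithfulSMul_points
  have hf : (fixedBy C g).ncard = 5 := by
    have := ncard_fixedBy_add_eq Nat.prime_five hg ⟨Δ, hΔ⟩ (by rw [hC])
    omega
  have hs (Δ' : C) (hΔ' : g • Δ' = Δ') : ({x | cl x = Δ'} ∩ fixedBy Ω g).ncard = 13 := by
    have hmod := D.modEq_ncard_class_inter_fixedBy Nat.prime_five hg hΔ'
    have hlt := D.ncard_class_inter_fixedBy_lt Nat.prime_five (by norm_num) (by norm_num) hg Δ'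
    unfold Nat.ModEq at hmod
    obtain ⟨α, rfl, hα⟩ := Set.nonempty_of_ncard_ne_zero
      (show ({x | cl x = Δ'} ∩ fixedBy Ω g).ncard ≠ 0 by omega)
    have hmul := D.ncard_fixedBy_through_mul Nat.prime_five (by norm_num) (by norm_num) hg hα
    omega
  obtain ⟨α, rfl, hα⟩ := Set.nonempty_of_ncard_ne_zero ((hs Δ hΔ).trans_ne (by norm_num))
  have hmeet (B : Bl) (hB : g • B = B) : (cl '' {x | I x B} ∩ fixedBy C g).ncard ≤ 3 := by
    have hmod := D.modEq_ncard_classes_meeting_inter_fixedBy Nat.prime_five hg hB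
    have hmul := D.ncard_classes_meeting_mul B
    have hle : (cl '' {x | I x B} ∩ fixedBy C g).ncard ≤ (fixedBy C g).ncard :=
      Set.ncard_le_ncard Set.inter_subset_right
    unfold Nat.ModEq at hmod
    omega
  have hthrough := D.ncard_fixedBy_through_mul Nat.prime_five (by norm_num) (by norm_num) hg hα
  have hle := D.mul_ncard_fixedBy_le Nat.prime_five (by norm_num) (by norm_num) hg hα hmeet
  rw [hs _ hΔ] at hthrough
  rw [ncard_fixedBy_points hs, hf] at hle
  omega

theorem not_faithfulSMul_of_ten_classes_of_twentyEight_points [Finite G] [Finite Ω] [Finite Bl]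
    [Finite C] (D : IsImprimitiveDesign G I cl 32 4 28 4) (hC : Nat.card C = 10) :
    ¬ FaithfulSMul G C := by
  intro _
  obtain ⟨Δ⟩ : Nonempty C := (Nat.card_pos_iff.mp (by omega)).1
  obtain ⟨α, rfl⟩ := D.cl_surjective Δ
  have hprim : IsPreprimitive G C := by
    refine D.isPreprimitive_classes α fun m hm hdvd => ?_
    rw [D.ncard_through_eq (r := 36) (by rw [hC])] at hdvd
    rw [hC] at hm ⊢
    have hle : m ≤ 10 := Nat.le_of_dvd (by norm_num) hm
    interval_cases m <;> omega
  have hfact := D.factorial_dvd_two_mul_card_of_isPreprimitive_classes hprim Nat.prime_seven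
    (by norm_num) (by omega) (by omega)
  have hstab : Nat.factorial 9 ∣ 2 * Nat.card (stabilizer G (cl α)) := by
    have := hprim.toIsPretransitive
    rw [← (stabilizer G (cl α)).index_mul_card, index_stabilizer_of_transitive, hC,
      mul_left_comm] at hfact
    exact Nat.dvd_of_mul_dvd_mul_left (by norm_num) hfact
  obtain ⟨⟨y, hyΔ⟩, hy⟩ := exists_orderOf_eq_of_factorial_dvd Nat.prime_five (by norm_num)
    (by norm_num) hstab
  exact D.smul_class_ne_of_orderOf_eq_five hC ((Subgroup.orderOf_mk _ _).symm.trans hy) _ hyΔ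

end FewClasses

section Stabilizers

theorem not_dvd_card [Finite G] [Finite Ω] [Finite Bl] [FaithfulSMul G C]
    (D : IsImprimitiveDesign G I cl k lam c ℓ) {p : ℕ} (hp : p.Prime) (hlam : lam < p)
    (hℓc : ℓ < c) (hcp : c < p) (hC : ¬ p ∣ Nat.card C) : ¬ p ∣ Nat.card G := by
  intro h
  have := D.isPretransitive_classes
  have := D.faithfulSMul_points
  have : Nonempty C := not_isEmpty_iff.mp fun _ => hC (Nat.card_of_isEmpty (α := C) ▸ dvd_zero p)
  obtain ⟨Δ⟩ := this
  rw [← (stabilizer G Δ).index_mul_card, index_stabilizer_of_transitive] at h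
  obtain ⟨g, hg, hgΔ⟩ := exists_orderOf_eq_smul_eq hp ((hp.dvd_mul.mp h).resolve_left hC)
  exact ne_one_of_orderOf_eq_prime hp hg (D.eq_one_of_smul_class_eq hp hlam hℓc hcp hg hgΔ)

theorem ncard_through_dvd_orbit_class [Finite Ω] [Finite Bl] [Finite C]
    (D : IsImprimitiveDesign G I cl k lam c ℓ) (α : Ω)
    (Γ : SubMulAction.ofStabilizer G (cl α)) :
    {B | I α B}.ncard ∣ lam * ((orbit (stabilizer G (cl α)) Γ).ncard * c) := by
  rw [← Set.ncard_image_of_injective _ Subtype.val_injective, ← D.ncard_preimage_cl]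
  refine D.ncard_through_dvd ?_ fun g hg x hx => ?_
  · rintro ⟨Γ', -, hΓ'⟩
    exact Γ'.2 hΓ'
  · obtain ⟨Γ', hΓ', hx⟩ := hx
    let g' : stabilizer G (cl α) := ⟨g, by rw [mem_stabilizer_iff, ← map_smul, hg]⟩
    exact ⟨g' • Γ', mem_orbit_of_mem_orbit g' hΓ',
      (congrArg (g • ·) hx).trans (map_smul cl g x).symm⟩

/- Double count the pairs of a class other than `Δ` and a block through two fixed points of `Δ`
meeting it. -/
theorem natCard_classes_sub_one_dvd [Finite Ω] [Finite Bl] [Finite C]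
    (D : IsImprimitiveDesign G I cl k lam c ℓ) {m : ℕ} (hm : m * ℓ = k) {Δ : C}
    (h : ∀ Γ Γ' : C, Γ ≠ Δ → Γ' ≠ Δ → ∃ n : G, (∀ x, cl x = Δ → n • x = x) ∧ n • Γ = Γ') :
    Nat.card C - 1 ∣ lam * (m - 1) := by
  have hc := D.two_le_c
  have hℓ := D.two_le_ℓ
  obtain ⟨α, β, rfl, hβ, hne⟩ := (Set.one_lt_ncard_iff (Set.toFinite _)).mp
    (show 1 < {x | cl x = Δ}.ncard by rw [D.ncard_class]; omega)
  let T : Set Bl := {B | I α B ∧ I β B}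
  have hle {Γ Γ' : C} (hΓ : Γ ≠ cl α) (hΓ' : Γ' ≠ cl α) :
      {B ∈ T | Γ ∈ cl '' {x | I x B}}.ncard ≤ {B ∈ T | Γ' ∈ cl '' {x | I x B}}.ncard := by
    obtain ⟨n, hn, rfl⟩ := h Γ Γ' hΓ hΓ'
    refine Set.ncard_le_ncard_of_injOn (n • ·) ?_ (MulAction.injective n).injOn
    rintro B ⟨⟨hαB, hβB⟩, x, hx, rfl⟩
    exact ⟨⟨hn α rfl ▸ D.smul_incident hαB, hn β hβ ▸ D.smul_incident hβB⟩,
      n • x, D.smul_incident hx, map_smul cl n x⟩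
  have hmeet (B : Bl) (hB : B ∈ T) :
      {Γ ∈ ({cl α}ᶜ : Set C) | Γ ∈ cl '' {x | I x B}}.ncard = m - 1 := by
    have hset : {Γ ∈ ({cl α}ᶜ : Set C) | Γ ∈ cl '' {x | I x B}} = cl '' {x | I x B} \ {cl α} :=
      Set.ext fun Γ => and_comm
    rw [hset, Set.ncard_sdiff_singleton_of_mem (s := cl '' {x | I x B}) ⟨α, hB.1, rfl⟩,
      Nat.eq_of_mul_eq_mul_right (by omega) ((D.ncard_classes_meeting_mul B).trans hm.symm)]
  obtain ⟨t, ht⟩ : ∃ t, ∀ Γ ∈ ({cl α}ᶜ : Set C), {B ∈ T | Γ ∈ cl '' {x | I x B}}.ncard = t := by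
    rcases Set.eq_empty_or_nonempty ({cl α}ᶜ : Set C) with hempty | ⟨Γ₀, hΓ₀⟩
    · exact ⟨0, fun Γ hΓ => (hempty ▸ hΓ).elim⟩
    · exact ⟨_, fun Γ hΓ => (hle hΓ hΓ₀).antisymm (hle hΓ₀ hΓ)⟩
  have hcompl : ({cl α}ᶜ : Set C).ncard = Nat.card C - 1 := by
    rw [Set.ncard_compl, Set.ncard_singleton]
  rw [← hcompl, ← D.ncard_pair hne]
  exact Dvd.intro _ (ncard_mul_eq_ncard_mul (Set.toFinite _) (Set.toFinite T) ht hmeet)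

end Stabilizers

section TwentyEightClasses

theorem isPreprimitive_classes_of_twentyEight_classes [Finite Ω] [Finite Bl] [Finite C]
    (D : IsImprimitiveDesign G I cl 32 4 10 2) (hC : Nat.card C = 28) : IsPreprimitive G C := by
  obtain ⟨Δ⟩ : Nonempty C := (Nat.card_pos_iff.mp (by omega)).1
  obtain ⟨α, rfl⟩ := D.cl_surjective Δ
  refine D.isPreprimitive_classes α fun m hm hdvd => ?_
  rw [D.ncard_through_eq (r := 36) (by rw [hC])] at hdvd
  rw [hC] at hm ⊢
  have hle : m ≤ 28 := Nat.le_of_dvd (by norm_num) hm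
  interval_cases m <;> omega

theorem isPreprimitive_class_of_twentyEight_classes [Finite Ω] [Finite Bl] [Finite C]
    (D : IsImprimitiveDesign G I cl 32 4 10 2) (hC : Nat.card C = 28) (Δ : C) :
    IsPreprimitive (stabilizer G Δ) (fiberSubMulAction cl Δ) := by
  obtain ⟨α, rfl⟩ := D.cl_surjective Δ
  refine D.isPreprimitive_class α fun m hm hdvd => ?_
  rw [D.ncard_through_eq (r := 36) (by rw [hC])] at hdvd
  have hle : m ≤ 10 := Nat.le_of_dvd (by norm_num) hm
  interval_cases m <;> omega

variable [Finite G] [Finite Ω] [Finite Bl] [Finite C] [FaithfulSMul G C]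

theorem ncard_fixedBy_classes_le_of_orderOf_eq_seven
    (D : IsImprimitiveDesign G I cl 32 4 10 2) (hC : Nat.card C = 28) {g : G}
    (hg : orderOf g = 7) : (fixedBy C g).ncard ≤ 14 := by
  by_contra hlt
  have hmod := card_modEq_ncard_fixedBy (X := C) Nat.prime_seven hg
  have hlt' := ncard_fixedBy_lt (X := C) (ne_one_of_orderOf_eq_prime Nat.prime_seven hg)
  rw [hC] at hmod hlt'
  unfold Nat.ModEq at hmod
  have hfact := factorial_dvd_two_mul_card_of_isPreprimitive
    (D.isPreprimitive_classes_of_twentyEight_classes hC) Nat.prime_seven hg (by omega)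
    (by omega)
  obtain ⟨y, hy⟩ := exists_orderOf_eq_of_factorial_dvd Nat.prime_eleven (by norm_num)
    (by omega) hfact
  exact D.not_dvd_card Nat.prime_eleven (by norm_num) (by norm_num) (by norm_num)
    (by rw [hC]; norm_num) (hy ▸ orderOf_dvd_natCard y)

theorem smul_class_ne_of_orderOf_eq_seven (D : IsImprimitiveDesign G I cl 32 4 10 2)
    (hC : Nat.card C = 28) {g : G} (hg : orderOf g = 7) (Δ : C) : g • Δ ≠ Δ := by
  intro hΔ
  have := D.faithfulSMul_points
  have hs (Δ' : C) (hΔ' : g • Δ' = Δ') : ({x | cl x = Δ'} ∩ fixedBy Ω g).ncard = 3 := by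
    have hmod := D.modEq_ncard_class_inter_fixedBy Nat.prime_seven hg hΔ'
    have hlt := D.ncard_class_inter_fixedBy_lt Nat.prime_seven (by norm_num) (by norm_num) hg Δ'
    unfold Nat.ModEq at hmod
    omega
  obtain ⟨α, rfl, hα⟩ := Set.nonempty_of_ncard_ne_zero ((hs Δ hΔ).trans_ne (by norm_num))
  have hf : (fixedBy C g).ncard = 7 ∨ (fixedBy C g).ncard = 14 := by
    have hmod := card_modEq_ncard_fixedBy (X := C) Nat.prime_seven hg
    have hle := D.ncard_fixedBy_classes_le_of_orderOf_eq_seven hC hg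
    have hpos : 0 < (fixedBy C g).ncard := (Set.ncard_pos (Set.toFinite _)).mpr ⟨_, hΔ⟩
    rw [hC] at hmod
    unfold Nat.ModEq at hmod
    omega
  have hmeet (B : Bl) (hB : g • B = B) :
      (cl '' {x | I x B} ∩ fixedBy C g).ncard ≤ (fixedBy C g).ncard - 5 := by
    have hmod := D.modEq_ncard_classes_meeting_inter_fixedBy Nat.prime_seven hg hB
    have hmul := D.ncard_classes_meeting_mul B
    have hle : (cl '' {x | I x B} ∩ fixedBy C g).ncard ≤ (fixedBy C g).ncard :=
      Set.ncard_le_ncard Set.inter_subset_right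
    unfold Nat.ModEq at hmod
    omega
  have hthrough := D.ncard_fixedBy_through_mul Nat.prime_seven (by norm_num) (by norm_num) hg hα
  have hle := D.mul_ncard_fixedBy_le Nat.prime_seven (by norm_num) (by norm_num) hg hα hmeet
  rw [hs _ hΔ] at hthrough
  rw [ncard_fixedBy_points hs] at hle
  rcases hf with hf | hf <;> rw [hf] at hle <;> omega

theorem not_factorial_dvd_two_mul_card_stabilizer_class (D : IsImprimitiveDesign G I cl 32 4 10 2)
    (hC : Nat.card C = 28) {n : ℕ} (hn : 7 ≤ n) (Δ : C) :
    ¬ n.factorial ∣ 2 * Nat.card (stabilizer G Δ) := by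
  intro hfact
  obtain ⟨⟨y, hyΔ⟩, hy⟩ := exists_orderOf_eq_of_factorial_dvd Nat.prime_seven (by norm_num) hn hfact
  exact D.smul_class_ne_of_orderOf_eq_seven hC ((Subgroup.orderOf_mk _ _).symm.trans hy) Δ hyΔ

theorem smul_point_ne_of_orderOf_eq_five (D : IsImprimitiveDesign G I cl 32 4 10 2)
    (hC : Nat.card C = 28) {g : G} (hg : orderOf g = 5) (α : Ω) : g • α ≠ α := by
  intro hα
  have := D.faithfulSMul_points
  have hgΔ : g • cl α = cl α := map_mem_fixedBy hα
  have hcard : Nat.card (fiberSubMulAction cl (cl α)) = 10 := by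
    rw [natCard_fiberSubMulAction, D.ncard_class]
  let g' : stabilizer G (cl α) := ⟨g, hgΔ⟩
  have hfix : (fixedBy (fiberSubMulAction cl (cl α)) g').ncard = 5 := by
    refine (ncard_fixedBy_subMulAction _ g').trans ?_
    have hmod := D.modEq_ncard_class_inter_fixedBy Nat.prime_five hg hgΔ
    have hlt := D.ncard_class_inter_fixedBy_lt Nat.prime_five (by norm_num) (by norm_num) hg (cl α)
    have hpos : 0 < ({x | cl x = cl α} ∩ fixedBy Ω g).ncard :=
      (Set.ncard_pos (Set.toFinite _)).mpr ⟨α, rfl, hα⟩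
    unfold Nat.ModEq at hmod
    change ({x | cl x = cl α} ∩ fixedBy Ω g).ncard = 5
    omega
  refine D.not_factorial_dvd_two_mul_card_stabilizer_class hC (n := 10) (by norm_num) (cl α) ?_
  rw [← hcard]
  exact factorial_dvd_two_mul_card_of_isPreprimitive
    (D.isPreprimitive_class_of_twentyEight_classes hC (cl α)) Nat.prime_five
    (g := g') ((Subgroup.orderOf_mk g hgΔ).trans hg) (by omega) (by omega)

theorem not_five_sq_dvd_card (D : IsImprimitiveDesign G I cl 32 4 10 2)
    (hC : Nat.card C = 28) : ¬ 5 ^ 2 ∣ Nat.card G := by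
  intro h
  have := D.isPretransitive
  obtain ⟨Δ⟩ : Nonempty C := (Nat.card_pos_iff.mp (by omega)).1
  obtain ⟨α, rfl⟩ := D.cl_surjective Δ
  rw [← (stabilizer G α).index_mul_card, index_stabilizer_of_transitive, D.natCard_points, hC] at h
  obtain ⟨g, hg, hgα⟩ := exists_orderOf_eq_smul_eq Nat.prime_five
    (by omega : 5 ∣ Nat.card (stabilizer G α))
  exact D.smul_point_ne_of_orderOf_eq_five hC hg α hgα

theorem ncard_orbit_class_ne_nine (D : IsImprimitiveDesign G I cl 32 4 10 2)
    (hC : Nat.card C = 28) {Δ : C} (Γ : SubMulAction.ofStabilizer G Δ) :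
    (orbit (stabilizer G Δ) Γ).ncard ≠ 9 := by
  intro h9
  have hprim := D.isPreprimitive_classes_of_twentyEight_classes hC
  by_cases h : ∀ g : G, orderOf g = 5 → g • Δ = Δ → g • (Γ : C) = Γ
  · obtain ⟨g, hg, hgΔ⟩ := D.exists_orderOf_eq_smul_class_eq Nat.prime_five (by norm_num) Δ
    have hne : Δ ≠ Γ := Ne.symm Γ.2
    refine ne_one_of_orderOf_eq_prime Nat.prime_five hg (eq_of_smul_eq_smul fun Γ' : C => ?_)
    rw [one_smul, smul_eq_of_forall_orderOf_eq hprim hne h hg hgΔ]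
  push Not at h
  obtain ⟨g, hg, hgΔ, hgΓ⟩ := h
  let g' : stabilizer G Δ := ⟨g, hgΔ⟩
  have hg' : orderOf g' = 5 := (Subgroup.orderOf_mk g hgΔ).trans hg
  have hcard : Nat.card (orbit (stabilizer G Δ) Γ) = 9 := (Nat.card_coe_set_eq _).trans h9
  have hfix : (fixedBy (orbit (stabilizer G Δ) Γ) g').ncard = 4 := by
    have hmod := card_modEq_ncard_fixedBy (X := orbit (stabilizer G Δ) Γ) Nat.prime_five hg'
    have hlt : (fixedBy (orbit (stabilizer G Δ) Γ) g').ncard < 9 := by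
      rw [← hcard]
      refine Set.ncard_lt_card fun h => hgΓ ?_
      have hmem : (⟨Γ, mem_orbit_self Γ⟩ : orbit (stabilizer G Δ) Γ) ∈ fixedBy _ g' :=
        h ▸ Set.mem_univ _
      exact congrArg (fun x => (x.1 : C)) hmem
    rw [hcard] at hmod
    unfold Nat.ModEq at hmod
    omega
  have horbit := isPreprimitive_of_card_eq_sq Nat.prime_five Nat.prime_three (by norm_num) hcard hg'
    (by omega) (by omega) (by omega)
  refine D.not_factorial_dvd_two_mul_card_stabilizer_class hC (n := 9) (by norm_num) Δ ?_
  rw [← hcard]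
  exact factorial_dvd_two_mul_card_of_isPreprimitive horbit Nat.prime_five hg' (by omega) (by omega)

theorem isPretransitive_ofStabilizer_class (D : IsImprimitiveDesign G I cl 32 4 10 2)
    (hC : Nat.card C = 28) (Δ : C) :
    IsPretransitive (stabilizer G Δ) (SubMulAction.ofStabilizer G Δ) := by
  obtain ⟨α, rfl⟩ := D.cl_surjective Δ
  refine isPretransitive_of_natCard_lt_two_mul_ncard_orbit fun Γ => ?_
  have hdvd := D.ncard_through_dvd_orbit_class α Γ
  rw [D.ncard_through_eq (r := 36) (by rw [hC])] at hdvd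
  have hpos : 0 < (orbit (stabilizer G (cl α)) Γ).ncard :=
    (Set.ncard_pos (Set.toFinite _)).mpr (nonempty_orbit Γ)
  have hne := D.ncard_orbit_class_ne_nine hC Γ
  rw [SubMulAction.nat_card_ofStabilizer_eq, hC]
  omega

theorem isMultiplyPretransitive_classes_two (D : IsImprimitiveDesign G I cl 32 4 10 2)
    (hC : Nat.card C = 28) : IsMultiplyPretransitive G C 2 := by
  have := D.isPretransitive_classes
  obtain ⟨Δ⟩ : Nonempty C := (Nat.card_pos_iff.mp (by omega)).1
  exact SubMulAction.ofStabilizer.isMultiplyPretransitive.mpr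
    (is_one_pretransitive_iff.mpr (D.isPretransitive_ofStabilizer_class hC Δ))

theorem ncard_fixedBy_classes_descFactorial_two_dvd (D : IsImprimitiveDesign G I cl 32 4 10 2)
    (hC : Nat.card C = 28) {g : G} (hg : orderOf g = 5) :
    (fixedBy C g).ncard.descFactorial 2 ∣
      Nat.card (Subgroup.normalizer (Subgroup.zpowers g : Set G)) := by
  have hmod := card_modEq_ncard_fixedBy (X := C) Nat.prime_five hg
  rw [hC] at hmod
  unfold Nat.ModEq at hmod
  exact descFactorial_ncard_fixedBy_dvd_card_normalizer
    (D.isMultiplyPretransitive_classes_two hC) Nat.prime_five hg (D.not_five_sq_dvd_card hC)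
    (by omega)

theorem ncard_fixedBy_classes_ne_eight (D : IsImprimitiveDesign G I cl 32 4 10 2)
    (hC : Nat.card C = 28) {g : G} (hg : orderOf g = 5) : (fixedBy C g).ncard ≠ 8 := by
  intro h
  have hdvd := D.ncard_fixedBy_classes_descFactorial_two_dvd hC hg
  rw [h] at hdvd
  have := Fact.mk Nat.prime_seven
  obtain ⟨⟨y, hyN⟩, hy⟩ := exists_prime_orderOf_dvd_card' 7
    ((by decide : 7 ∣ Nat.descFactorial 8 2).trans hdvd)
  replace hy : orderOf y = 7 := (Subgroup.orderOf_mk y hyN).symm.trans hy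
  have hmod := ncard_modEq_ncard_inter_fixedBy Nat.prime_seven hy (Set.toFinite (fixedBy C g))
    fun Δ hΔ => smul_mem_fixedBy_of_mem_normalizer hyN hΔ
  rw [h] at hmod
  unfold Nat.ModEq at hmod
  obtain ⟨Δ, -, hΔ⟩ := Set.nonempty_of_ncard_ne_zero
    (show (fixedBy C g ∩ fixedBy C y).ncard ≠ 0 by omega)
  exact D.smul_class_ne_of_orderOf_eq_seven hC hy Δ hΔ

theorem ncard_fixedBy_classes_eq_three (D : IsImprimitiveDesign G I cl 32 4 10 2)
    (hC : Nat.card C = 28) {g : G} (hg : orderOf g = 5) : (fixedBy C g).ncard = 3 := by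
  have hdvd := (D.ncard_fixedBy_classes_descFactorial_two_dvd hC hg).trans
    (Subgroup.card_subgroup_dvd_card _)
  have hprime (p : ℕ) (hp : p.Prime) (hp11 : 11 ≤ p) (hpC : ¬ p ∣ 28) :
      ¬ p ∣ (fixedBy C g).ncard.descFactorial 2 := fun h =>
    D.not_dvd_card hp (by omega) (by norm_num) (by omega) (hC ▸ hpC) (h.trans hdvd)
  have hcases : (fixedBy C g).ncard = 3 ∨ (fixedBy C g).ncard = 8 ∨ (fixedBy C g).ncard = 13 ∨
      (fixedBy C g).ncard = 18 ∨ (fixedBy C g).ncard = 23 := by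
    have hmod := card_modEq_ncard_fixedBy (X := C) Nat.prime_five hg
    have hlt := ncard_fixedBy_lt (X := C) (ne_one_of_orderOf_eq_prime Nat.prime_five hg)
    rw [hC] at hmod hlt
    unfold Nat.ModEq at hmod
    omega
  rcases hcases with h | h | h | h | h
  · exact h
  · exact absurd h (D.ncard_fixedBy_classes_ne_eight hC hg)
  · exact absurd (by rw [h]; decide) (hprime 13 (by norm_num) (by norm_num) (by norm_num))
  · exact absurd (by rw [h]; decide) (hprime 17 (by norm_num) (by norm_num) (by norm_num))
  · exact absurd (by rw [h]; decide) (hprime 11 (by norm_num) (by norm_num) (by norm_num))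

theorem isPreprimitive_ofStabilizer_class (D : IsImprimitiveDesign G I cl 32 4 10 2)
    (hC : Nat.card C = 28) (Δ : C) :
    IsPreprimitive (stabilizer G Δ) (SubMulAction.ofStabilizer G Δ) := by
  have := D.isPretransitive_ofStabilizer_class hC Δ
  obtain ⟨g, hg, hgΔ⟩ := D.exists_orderOf_eq_smul_class_eq Nat.prime_five (by norm_num) Δ
  have hcard : Nat.card (SubMulAction.ofStabilizer G Δ) = 27 := by
    rw [SubMulAction.nat_card_ofStabilizer_eq, hC]
  have hfix : (fixedBy (SubMulAction.ofStabilizer G Δ) (⟨g, hgΔ⟩ : stabilizer G Δ)).ncard = 2 := by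
    have hset : (SubMulAction.ofStabilizer G Δ : Set C) ∩
        fixedBy C (⟨g, hgΔ⟩ : stabilizer G Δ) = fixedBy C g \ {Δ} :=
      Set.inter_comm _ _
    rw [ncard_fixedBy_subMulAction, hset,
      Set.ncard_sdiff_singleton_of_mem (s := fixedBy C g) hgΔ,
      D.ncard_fixedBy_classes_eq_three hC hg]
  refine isPreprimitive_of_ncard_fixedBy_lt_mod Nat.prime_five
    ((Subgroup.orderOf_mk g hgΔ).trans hg)
    (Set.nonempty_of_ncard_ne_zero (hfix.trans_ne two_ne_zero)) fun m hm => ?_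
  rw [hcard] at hm ⊢
  rw [hfix]
  have hle : m ≤ 27 := Nat.le_of_dvd (by norm_num) hm
  interval_cases m <;> omega

theorem toPermHom_stabilizer_class_injective (D : IsImprimitiveDesign G I cl 32 4 10 2)
    (hC : Nat.card C = 28) (Δ : C) :
    Function.Injective (toPermHom (stabilizer G Δ) (fiberSubMulAction cl Δ)) := by
  have := D.isPreprimitive_ofStabilizer_class hC Δ
  let N := (toPermHom (stabilizer G Δ) (fiberSubMulAction cl Δ)).ker
  have hN {n : stabilizer G Δ} (hn : n ∈ N) (x : Ω) (hx : cl x = Δ) : (n : G) • x = x :=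
    congrArg Subtype.val (Equiv.Perm.congr_fun hn ⟨x, hx⟩)
  have hfixed : fixedPoints N (SubMulAction.ofStabilizer G Δ) = Set.univ := by
    by_contra hne
    have := IsQuasiPreprimitive.isPretransitive_of_normal hne
    have hdvd := D.natCard_classes_sub_one_dvd (m := 16) rfl (Δ := Δ) fun Γ Γ' hΓ hΓ' => by
      obtain ⟨n, hn⟩ := exists_smul_eq N (⟨Γ, hΓ⟩ : SubMulAction.ofStabilizer G Δ) ⟨Γ', hΓ'⟩
      exact ⟨n, hN n.2, congrArg Subtype.val hn⟩
    rw [hC] at hdvd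
    omega
  refine (injective_iff_map_eq_one _).mpr fun n hn => Subtype.ext ?_
  refine eq_of_smul_eq_smul fun Γ : C => ?_
  suffices h : (n : G) • Γ = Γ from h.trans (one_smul G Γ).symm
  by_cases hΓ : Γ = Δ
  · exact hΓ ▸ n.2
  · exact congrArg Subtype.val
      (Set.eq_univ_iff_forall.mp hfixed (⟨Γ, hΓ⟩ : SubMulAction.ofStabilizer G Δ) ⟨n, hn⟩)

theorem exists_orderOf_eq_three_smul_classes_eq (D : IsImprimitiveDesign G I cl 32 4 10 2)
    (hC : Nat.card C = 28) :
    ∃ (y : G) (Δ Γ : C), orderOf y = 3 ∧ Γ ≠ Δ ∧ y • Δ = Δ ∧ y • Γ = Γ := by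
  obtain ⟨Δ₀⟩ : Nonempty C := (Nat.card_pos_iff.mp (by omega)).1
  obtain ⟨g, hg, -⟩ := D.exists_orderOf_eq_smul_class_eq Nat.prime_five (by norm_num) Δ₀
  have hfix := D.ncard_fixedBy_classes_eq_three hC hg
  have hdvd := D.ncard_fixedBy_classes_descFactorial_two_dvd hC hg
  rw [hfix] at hdvd
  have := Fact.mk Nat.prime_three
  obtain ⟨⟨y, hyN⟩, hy⟩ := exists_prime_orderOf_dvd_card' 3
    ((by decide : 3 ∣ Nat.descFactorial 3 2).trans hdvd)
  replace hy : orderOf y = 3 := (Subgroup.orderOf_mk y hyN).symm.trans hy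
  have hcomm : Commute y g := commute_of_mem_normalizer_of_coprime hyN (by rw [hy, hg]; decide)
  have hmod := ncard_modEq_ncard_inter_fixedBy Nat.prime_three hy
    (Set.toFinite (fixedBy C g)ᶜ) fun Δ (hΔ : g • Δ ≠ Δ) => by
      change g • y • Δ ≠ y • Δ
      rwa [← mul_smul, ← hcomm.eq, mul_smul, Ne, smul_left_cancel_iff]
  rw [Set.ncard_compl, hfix, hC] at hmod
  unfold Nat.ModEq at hmod
  obtain ⟨Δ, hgΔ, hyΔ⟩ := Set.nonempty_of_ncard_ne_zero
    (show ((fixedBy C g)ᶜ ∩ fixedBy C y).ncard ≠ 0 by omega)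
  exact ⟨y, Δ, g • Δ, hy, hgΔ, hyΔ, by rw [← mul_smul, hcomm.eq, mul_smul, hyΔ]⟩

theorem exists_eightyOne_dvd_card_stabilizer_class (D : IsImprimitiveDesign G I cl 32 4 10 2)
    (hC : Nat.card C = 28) : ∃ Δ : C, 81 ∣ Nat.card (stabilizer G Δ) := by
  obtain ⟨y, Δ, Γ, hy, hΓ, hyΔ, hyΓ⟩ := D.exists_orderOf_eq_three_smul_classes_eq hC
  have := D.isPretransitive_ofStabilizer_class hC Δ
  let a : SubMulAction.ofStabilizer G Δ := ⟨Γ, hΓ⟩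
  let y' : stabilizer (stabilizer G Δ) a := ⟨⟨y, hyΔ⟩, Subtype.ext hyΓ⟩
  have hy' : orderOf y' = 3 :=
    (Subgroup.orderOf_mk _ _).trans ((Subgroup.orderOf_mk y hyΔ).trans hy)
  have h3 : 3 ∣ Nat.card (stabilizer (stabilizer G Δ) a) := hy' ▸ orderOf_dvd_natCard y'
  refine ⟨Δ, ?_⟩
  rw [← (stabilizer (stabilizer G Δ) a).index_mul_card, index_stabilizer_of_transitive,
    SubMulAction.nat_card_ofStabilizer_eq, hC]
  exact mul_dvd_mul_left 27 h3

end TwentyEightClasses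

theorem not_faithfulSMul_of_twentyEight_classes [Finite G] [Finite Ω] [Finite Bl] [Finite C]
    (D : IsImprimitiveDesign G I cl 32 4 10 2) (hC : Nat.card C = 28) : ¬ FaithfulSMul G C := by
  intro _
  obtain ⟨Δ, h81⟩ := D.exists_eightyOne_dvd_card_stabilizer_class hC
  let φ := toPermHom (stabilizer G Δ) (fiberSubMulAction cl Δ)
  have hcard : Nat.card (fiberSubMulAction cl Δ) = 10 := by
    rw [natCard_fiberSubMulAction, D.ncard_class]
  have hindex : ¬ 3 ∣ φ.range.index := by
    intro h3
    have hinj := D.toPermHom_stabilizer_class_injective hC Δ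
    have hrange : Nat.card φ.range = Nat.card (stabilizer G Δ) :=
      (Nat.card_congr (MonoidHom.ofInjective hinj).toEquiv).symm
    have h := mul_dvd_mul h3 (hrange ▸ h81)
    rw [φ.range.index_mul_card, Nat.card_perm, hcard] at h
    exact absurd h (by decide)
  refine D.not_factorial_dvd_two_mul_card_stabilizer_class hC (n := 10) (by norm_num) Δ ?_
  rw [← hcard]
  exact factorial_dvd_two_mul_card_of_not_three_dvd_index
    (D.isPreprimitive_class_of_twentyEight_classes hC Δ) (by omega) hindex

section ExceptionalParameters

/-- The tuples `(λ, v, k, c, d, ℓ)` of the theorem. -/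
def exceptionalParameters : Set (ℕ × ℕ × ℕ × ℕ × ℕ × ℕ) :=
  {(3, 100, 12, 10, 10, 2), (4, 100, 12, 10, 10, 2), (4, 231, 24, 11, 21, 2),
    (4, 280, 32, 10, 28, 2), (4, 280, 32, 28, 10, 4)}

theorem exists_replication_number_of_mem_exceptionalParameters {lam v k c d ℓ : ℕ}
    (h : (lam, v, k, c, d, ℓ) ∈ exceptionalParameters) :
    ℓ < c ∧ ∃ r, r * (k - 1) = lam * (d * c - 1) ∧ ∀ m ≤ c, r ∣ lam * (m - 1) →
      (∀ p : ℕ, p.Prime → p ∣ m → p ≤ lam) → m = 1 := by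
  simp only [exceptionalParameters, Set.mem_insert_iff, Set.mem_singleton_iff,
    Prod.mk.injEq] at h
  obtain ⟨rfl, -, rfl, rfl, rfl, rfl⟩ | ⟨rfl, -, rfl, rfl, rfl, rfl⟩ |
    ⟨rfl, -, rfl, rfl, rfl, rfl⟩ | ⟨rfl, -, rfl, rfl, rfl, rfl⟩ |
    ⟨rfl, -, rfl, rfl, rfl, rfl⟩ := h
  · refine ⟨by norm_num, 27, by norm_num, fun m hm hdvd hprime => ?_⟩
    have := hprime 5 (by norm_num)
    omega
  · refine ⟨by norm_num, 36, by norm_num, fun m hm hdvd hprime => ?_⟩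
    have := hprime 5 (by norm_num)
    omega
  · refine ⟨by norm_num, 40, by norm_num, fun m hm hdvd hprime => ?_⟩
    have := hprime 11 (by norm_num)
    omega
  · refine ⟨by norm_num, 36, by norm_num, fun m hm hdvd hprime => ?_⟩
    have := hprime 5 (by norm_num)
    omega
  · refine ⟨by norm_num, 36, by norm_num, fun m hm hdvd hprime => ?_⟩
    have := hprime 5 (by norm_num)
    have := hprime 7 (by norm_num)
    have := hprime 19 (by norm_num)
    obtain rfl | rfl | rfl | rfl : m = 1 ∨ m = 10 ∨ m = 19 ∨ m = 28 := by omega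
    all_goals omega

variable [Finite G] [Finite Ω] [Finite Bl] [Finite C]

theorem not_faithfulSMul_of_mem_exceptionalParameters (D : IsImprimitiveDesign G I cl k lam c ℓ)
    (h : (lam, Nat.card Ω, k, c, Nat.card C, ℓ) ∈ exceptionalParameters) :
    ¬ FaithfulSMul G C := by
  simp only [exceptionalParameters, Set.mem_insert_iff, Set.mem_singleton_iff,
    Prod.mk.injEq] at h
  obtain ⟨rfl, -, rfl, rfl, hC, rfl⟩ | ⟨rfl, -, rfl, rfl, hC, rfl⟩ | ⟨rfl, -, rfl, rfl, hC, rfl⟩ |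
    ⟨rfl, -, rfl, rfl, hC, rfl⟩ | ⟨rfl, -, rfl, rfl, hC, rfl⟩ := h
  · exact D.not_faithfulSMul_of_ten_classes_of_ten_points (Or.inl rfl) hC
  · exact D.not_faithfulSMul_of_ten_classes_of_ten_points (Or.inr rfl) hC
  · exact D.not_faithfulSMul_of_twentyOne_classes hC
  · exact D.not_faithfulSMul_of_twentyEight_classes hC
  · exact D.not_faithfulSMul_of_ten_classes_of_twentyEight_points hC

theorem eq_one_of_mem_exceptionalParameters [FaithfulSMul G Ω]
    (D : IsImprimitiveDesign G I cl k lam c ℓ)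
    (h : (lam, Nat.card Ω, k, c, Nat.card C, ℓ) ∈ exceptionalParameters)
    {g : G} (hgC : ∀ Δ : C, g • Δ = Δ) {Δ : C} (hg : ∀ x, cl x = Δ → g • x = x) : g = 1 := by
  obtain ⟨hℓc, r, hr, hnum⟩ := exists_replication_number_of_mem_exceptionalParameters h
  refine D.eq_one_of_smul_classes_eq hℓc (fun α m hm hdvd => hnum m hm ?_) hgC hg
  rwa [D.ncard_through_eq hr] at hdvd

end ExceptionalParameters

end IsImprimitiveDesign

section InvariantFamilies

variable {Ω : Type*} [DecidableEq Ω] {G : Subgroup (Equiv.Perm Ω)} {𝓑 𝓒 : Finset (Finset Ω)}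

/-- A family `S` of finite sets invariant under a permutation group, with its induced action. -/
def invariantFamily (G : Subgroup (Equiv.Perm Ω)) (S : Finset (Finset Ω))
    (hS : ∀ g ∈ G, ∀ B ∈ S, B.image ⇑g ∈ S) : SubMulAction G (Finset Ω) where
  carrier := S
  smul_mem' g _ hB := hS g g.2 _ hB

-- Makes the action available where `Pointwise` is not open.
instance (S : Finset (Finset Ω)) (hS : ∀ g ∈ G, ∀ B ∈ S, B.image ⇑g ∈ S) :
    MulAction G (invariantFamily G S hS) :=
  inferInstance

theorem natCard_invariantFamily (hGC : ∀ g ∈ G, ∀ Δ ∈ 𝓒, Δ.image ⇑g ∈ 𝓒) :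
    Nat.card (invariantFamily G 𝓒 hGC) = 𝓒.card :=
  Set.ncard_coe_finset 𝓒

theorem exists_mulActionHom_forall_eq_iff_mem (hpart : ∀ ω : Ω, ∃! Δ, Δ ∈ 𝓒 ∧ ω ∈ Δ)
    (hGC : ∀ g ∈ G, ∀ Δ ∈ 𝓒, Δ.image ⇑g ∈ 𝓒) :
    ∃ cl : Ω →[G] invariantFamily G 𝓒 hGC, ∀ ω Δ, cl ω = Δ ↔ ω ∈ (Δ : Finset Ω) := by
  choose cl hcl huniq using hpart
  have hiff (ω : Ω) (Δ : invariantFamily G 𝓒 hGC) :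
      (⟨cl ω, (hcl ω).1⟩ : invariantFamily G 𝓒 hGC) = Δ ↔ ω ∈ (Δ : Finset Ω) :=
    ⟨fun h => h ▸ (hcl ω).2, fun h => Subtype.ext (huniq ω Δ ⟨Δ.2, h⟩).symm⟩
  exact ⟨⟨fun ω => ⟨cl ω, (hcl ω).1⟩, fun g ω =>
    (hiff _ _).mpr (Finset.smul_mem_smul_finset (hcl ω).2)⟩, hiff⟩

theorem exists_ne_one_forall_image_eq_of_not_faithfulSMul
    {hGC : ∀ g ∈ G, ∀ Δ ∈ 𝓒, Δ.image ⇑g ∈ 𝓒} (h : ¬ FaithfulSMul G (invariantFamily G 𝓒 hGC)) :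
    ∃ g ∈ G, (∀ Δ ∈ 𝓒, Δ.image ⇑g = Δ) ∧ g ≠ 1 := by
  by_contra! hker
  exact h <| faithfulSMul_of_forall_eq_one fun g hg =>
    Subtype.ext (hker g g.2 fun Δ hΔ => congrArg Subtype.val (hg ⟨Δ, hΔ⟩))

theorem ncard_setOf_invariantFamily (hGB : ∀ g ∈ G, ∀ B ∈ 𝓑, B.image ⇑g ∈ 𝓑)
    (p : Finset Ω → Prop) [DecidablePred p] :
    {B : invariantFamily G 𝓑 hGB | p B}.ncard = (𝓑.filter p).card := by
  rw [← Set.ncard_coe_finset, ← Set.ncard_image_of_injective _ Subtype.val_injective]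
  congr 1
  ext B
  simp only [Set.mem_image, Finset.coe_filter]
  exact ⟨fun ⟨B, hB, h⟩ => h ▸ ⟨B.2, hB⟩, fun hB => ⟨⟨B, hB.1⟩, hB.2, rfl⟩⟩

theorem isImprimitiveDesign_invariantFamily {k lam c ℓ : ℕ} (hlam1 : 1 ≤ lam)
    (hkcard : ∀ B ∈ 𝓑, B.card = k)
    (hpairs : ∀ α β : Ω, α ≠ β → (𝓑.filter (fun B => α ∈ B ∧ β ∈ B)).card = lam)
    (hGB : ∀ g ∈ G, ∀ B ∈ 𝓑, B.image ⇑g ∈ 𝓑)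
    (hflag : ∀ B₁ ∈ 𝓑, ∀ B₂ ∈ 𝓑, ∀ α₁ ∈ B₁, ∀ α₂ ∈ B₂,
      ∃ g ∈ G, B₁.image ⇑g = B₂ ∧ g α₁ = α₂)
    (hccard : ∀ Δ ∈ 𝓒, Δ.card = c) (hc2 : 2 ≤ c)
    {hGC : ∀ g ∈ G, ∀ Δ ∈ 𝓒, Δ.image ⇑g ∈ 𝓒} (hl2 : 2 ≤ ℓ)
    (hlcap : ∀ B ∈ 𝓑, ∀ Δ ∈ 𝓒, (B ∩ Δ).Nonempty → (B ∩ Δ).card = ℓ)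
    {cl : Ω →[G] invariantFamily G 𝓒 hGC} (hcl : ∀ ω Δ, cl ω = Δ ↔ ω ∈ (Δ : Finset Ω)) :
    IsImprimitiveDesign G (fun ω (B : invariantFamily G 𝓑 hGB) => ω ∈ (B : Finset Ω)) cl
      k lam c ℓ where
  ncard_block B := (Set.ncard_coe_finset _).trans (hkcard B B.2)
  ncard_pair hxy := (ncard_setOf_invariantFamily hGB _).trans (hpairs _ _ hxy)
  smul_incident hx := Finset.smul_mem_smul_finset hx
  exists_smul_eq_smul_eq {x y A B} hx hy := by
    obtain ⟨g, hg, hgA, hgx⟩ := hflag A A.2 B B.2 x hx y hy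
    exact ⟨⟨g, hg⟩, hgx, Subtype.ext hgA⟩
  ncard_class Δ := by
    simp only [hcl]
    exact (Set.ncard_coe_finset _).trans (hccard Δ Δ.2)
  ncard_block_inter_class {x B} hx := by
    have hset : {y | y ∈ (B : Finset Ω) ∧ cl y = cl x} = ((B : Finset Ω) ∩ cl x : Finset Ω) := by
      ext y
      simp only [hcl, Set.mem_ofPred_eq, Finset.coe_inter, Set.mem_inter_iff, Finset.mem_coe]
    rw [hset, Set.ncard_coe_finset]
    exact hlcap B B.2 _ (cl x).2 ⟨x, Finset.mem_inter.mpr ⟨hx, (hcl x _).mp rfl⟩⟩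
  one_le_lam := hlam1
  two_le_c := hc2
  two_le_ℓ := hl2

end InvariantFamilies

end Designs

theorem stmt_17
    {Ω : Type*} [Fintype Ω] [DecidableEq Ω]
    (v k lam c d ℓ : ℕ)
    (𝓑 𝓒 : Finset (Finset Ω))
    (G : Subgroup (Equiv.Perm Ω))
    (hv : Fintype.card Ω = v)
    (hlam1 : 1 ≤ lam)
    (hkcard : ∀ B ∈ 𝓑, B.card = k)
    (hpairs : ∀ α β : Ω, α ≠ β → (𝓑.filter (fun B => α ∈ B ∧ β ∈ B)).card = lam)
    (hk2 : 2 < k) (hkv : k < v)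
    (hGB : ∀ g ∈ G, ∀ B ∈ 𝓑, B.image ⇑g ∈ 𝓑)
    (hflag : ∀ B₁ ∈ 𝓑, ∀ B₂ ∈ 𝓑, ∀ α₁ ∈ B₁, ∀ α₂ ∈ B₂,
        ∃ g ∈ G, B₁.image ⇑g = B₂ ∧ g α₁ = α₂)
    (hpart : ∀ ω : Ω, ∃! Δ, Δ ∈ 𝓒 ∧ ω ∈ Δ)
    (hdcard : 𝓒.card = d) (hd2 : 2 ≤ d)
    (hccard : ∀ Δ ∈ 𝓒, Δ.card = c) (hc2 : 2 ≤ c)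
    (hGC : ∀ g ∈ G, ∀ Δ ∈ 𝓒, Δ.image ⇑g ∈ 𝓒)
    (hl2 : 2 ≤ ℓ)
    (hlcap : ∀ B ∈ 𝓑, ∀ Δ ∈ 𝓒, (B ∩ Δ).Nonempty → (B ∩ Δ).card = ℓ)
    (htuple : (lam, v, k, c, d, ℓ) = (3, 100, 12, 10, 10, 2) ∨
      (lam, v, k, c, d, ℓ) = (4, 100, 12, 10, 10, 2) ∨
      (lam, v, k, c, d, ℓ) = (4, 231, 24, 11, 21, 2) ∨
      (lam, v, k, c, d, ℓ) = (4, 280, 32, 10, 28, 2) ∨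
      (lam, v, k, c, d, ℓ) = (4, 280, 32, 28, 10, 4))
    : -- the kernel K of the action of G on 𝓒 is nontrivial
      (∃ g ∈ G, (∀ Δ ∈ 𝓒, Δ.image ⇑g = Δ) ∧ g ≠ 1) ∧
      -- and K acts faithfully on every class
      (∀ Δ ∈ 𝓒, ∀ g ∈ G, (∀ Δ' ∈ 𝓒, Δ'.image ⇑g = Δ') → (∀ ω ∈ Δ, g ω = ω) → g = 1) := by
  obtain ⟨cl, hcl⟩ := exists_mulActionHom_forall_eq_iff_mem hpart hGC
  have D := isImprimitiveDesign_invariantFamily hlam1 hkcard hpairs hGB hflag hccard hc2 hl2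
    hlcap hcl
  have hparam : (lam, Nat.card Ω, k, c, Nat.card (invariantFamily G 𝓒 hGC), ℓ) ∈
      IsImprimitiveDesign.exceptionalParameters := by
    rw [natCard_invariantFamily, Nat.card_eq_fintype_card, hv, hdcard]
    exact htuple
  refine ⟨exists_ne_one_forall_image_eq_of_not_faithfulSMul
    (D.not_faithfulSMul_of_mem_exceptionalParameters hparam), fun Δ hΔ g hg hgC hgΔ => ?_⟩
  exact congrArg Subtype.val (D.eq_one_of_mem_exceptionalParameters hparam (g := ⟨g, hg⟩)
    (Δ := ⟨Δ, hΔ⟩) (fun Δ' => Subtype.ext (hgC Δ' Δ'.2)) fun x hx => hgΔ x ((hcl x _).mp hx))
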